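/- arXiv:2307.04627 — 7 statements merged into one kernel-verified Lean document; each statement's English description precedes it below -/
import Mathlib

section
/- Let E and F be Banach spaces, let (I, ≤) be a directed set that contains a countable majorizing subset, and let (T_i)_{i ∈ I} be a family of bounded linear operators from E to F. Let W ⊆ F be a closed vector subspace. If for every x ∈ E there exists i₀ ∈ I such that T_i x ∈ W for all i ≥ i₀, then there exists a single index i₀ ∈ I such that T_i x ∈ W for all i ≥ i₀ and all x ∈ E. -/
/-!
For `j` in a countable majorizing set `J`, the vectors `x` with `T i x ∈ W` for all `i ≥ j` form a
closed subspace of `E`. By hypothesis these countably many subspaces cover `E`, so by Baire's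
theorem one of them has nonempty interior; but a subspace with nonempty interior is all of `E`.
-/

open Filter Topology

section BaireModule

variable {R E : Type*} [Ring R] [TopologicalSpace R] [NeBot (𝓝[{r : R | IsUnit r}] 0)]
  [AddCommGroup E] [TopologicalSpace E] [ContinuousAdd E] [BaireSpace E]
  [Module R E] [ContinuousSMul R E]

theorem exists_submodule_eq_top_of_iUnion_eq_univ {κ : Type*} [Countable κ]
    {V : κ → Submodule R E} (hV : ∀ k, IsClosed (V k : Set E))
    (hcover : ⋃ k, (V k : Set E) = Set.univ) :
    ∃ k, V k = ⊤ := by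
  obtain ⟨k, hk⟩ := nonempty_interior_of_iUnion_of_closed hV hcover
  exact ⟨k, (V k).eq_top_of_nonempty_interior' hk⟩

theorem eventually_submodule_eq_top_of_forall_eventually_mem {ι : Type*} [Preorder ι]
    (hcof : ∃ J : Set ι, J.Countable ∧ IsCofinal J)
    {V : ι → Submodule R E} (hV : ∀ i, IsClosed (V i : Set E))
    (hmem : ∀ x : E, ∃ i₀ : ι, ∀ i, i₀ ≤ i → x ∈ V i) :
    ∃ i₀ : ι, ∀ i, i₀ ≤ i → V i = ⊤ := by
  obtain ⟨J, hJ, hcof⟩ := hcof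
  have : Countable J := hJ.to_subtype
  let tail (j : J) : Submodule R E := ⨅ i : Set.Ici (j : ι), V i
  have isClosed_tail (j : J) : IsClosed (tail j : Set E) := by
    rw [Submodule.coe_iInf]
    exact isClosed_iInter fun i => hV i
  have iUnion_tail : ⋃ j, (tail j : Set E) = Set.univ := by
    refine Set.iUnion_eq_univ_iff.2 fun x => ?_
    obtain ⟨i₀, hi₀⟩ := hmem x
    obtain ⟨j, hjJ, hij⟩ := hcof i₀
    exact ⟨⟨j, hjJ⟩, (Submodule.mem_iInf _).2 fun i => hi₀ i (hij.trans i.2)⟩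
  obtain ⟨j, hj⟩ := exists_submodule_eq_top_of_iUnion_eq_univ isClosed_tail iUnion_tail
  exact ⟨j, fun i hi => iInf_eq_top.1 hj ⟨i, hi⟩⟩

theorem eventually_mapsInto_closed_subspace_uniformly_general
    {S F : Type*} [Semiring S] {σ : R →+* S} [AddCommMonoid F] [TopologicalSpace F] [Module S F]
    {ι : Type*} [Preorder ι] (hcof : ∃ J : Set ι, J.Countable ∧ IsCofinal J)
    (T : ι → E →SL[σ] F) (W : Submodule S F) (hW : IsClosed (W : Set F))
    (hT : ∀ x : E, ∃ i₀ : ι, ∀ i, i₀ ≤ i → T i x ∈ W) :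
    ∃ i₀ : ι, ∀ i, i₀ ≤ i → ∀ x : E, T i x ∈ W := by
  have isClosed_comap (i : ι) : IsClosed (W.comap (T i : E →ₛₗ[σ] F) : Set E) :=
    hW.preimage (T i).continuous
  obtain ⟨i₀, hi₀⟩ := eventually_submodule_eq_top_of_forall_eventually_mem hcof isClosed_comap hT
  exact ⟨i₀, fun i hi => Submodule.eq_top_iff'.1 (hi₀ i hi)⟩

end BaireModule

/-- Let `E` and `F` be Banach spaces, let `(I, ≤)` be a directed set containing a countable
majorizing subset, and let `(T i)_{i ∈ I}` be a family of bounded linear operators from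
`E` to `F`.  Let `W ⊆ F` be a closed vector subspace.  If for every `x ∈ E` there exists
`i₀` such that `T i x ∈ W` for all `i ≥ i₀`, then `i₀` can be chosen independently of `x`. -/
theorem eventually_mapsInto_closed_subspace_uniformly
    {E F : Type*} [NormedAddCommGroup E] [NormedSpace ℝ E] [CompleteSpace E]
    [NormedAddCommGroup F] [NormedSpace ℝ F] [CompleteSpace F]
    {ι : Type*} [Nonempty ι] [Preorder ι] [IsDirected ι (· ≤ ·)]
    (hmaj : ∃ J : Set ι, J.Countable ∧ ∀ i : ι, ∃ j ∈ J, i ≤ j)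
    (T : ι → E →L[ℝ] F)
    (W : Submodule ℝ F) (hW : IsClosed (W : Set F))
    (hind : ∀ x : E, ∃ i₀ : ι, ∀ i, i₀ ≤ i → T i x ∈ W) :
    ∃ i₀ : ι, ∀ i, i₀ ≤ i → ∀ x : E, T i x ∈ W :=
  eventually_mapsInto_closed_subspace_uniformly_general hmaj T W hW hind
end

section
/- Let E be a Banach space, let (I, ≤) be a directed set that contains a countable majorizing subset, and let (T_i)_{i ∈ I} be a family of bounded linear operators on E. Let V ⊆ E be a closed vector subspace. If V is individually eventually invariant under (T_i), i.e., for each v ∈ V there exists i₀ ∈ I such that T_i v ∈ V for all i ≥ i₀, then V is uniformly eventually invariant, i.e., there exists i₀ ∈ I such that T_i V ⊆ V for all i ≥ i₀. -/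
/-!
For a fixed index `j`, the vectors that every `T i` with `j ≤ i` sends into `V` form a closed
subspace. Individual eventual invariance says that these subspaces cover `V`, already when `j` runs
over a countable majorizing set. By Baire's theorem one of them has nonempty interior relative to
`V`, and a subspace with nonempty interior is everything.
-/

open Filter Topology

section BaireCovering

variable {R M κ : Type*} [Ring R] [TopologicalSpace R] [NeBot (𝓝[{r : R | IsUnit r}] 0)]
  [AddCommGroup M] [TopologicalSpace M] [ContinuousAdd M] [Module R M] [ContinuousSMul R M]
  [Countable κ]

theorem exists_closedSubmodule_eq_top_of_iUnion_eq_univ [BaireSpace M]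
    (S : κ → ClosedSubmodule R M) (hS : ⋃ k, (S k : Set M) = Set.univ) : ∃ k, S k = ⊤ := by
  obtain ⟨k, hk⟩ := nonempty_interior_of_iUnion_of_closed (fun k => (S k).isClosed) hS
  exact ⟨k, ClosedSubmodule.toSubmodule_injective <|
    (S k).toSubmodule.eq_top_of_nonempty_interior' hk⟩

theorem exists_le_closedSubmodule_of_subset_iUnion (V : Submodule R M) [BaireSpace V]
    (S : κ → ClosedSubmodule R M) (hV : (V : Set M) ⊆ ⋃ k, (S k : Set M)) :
    ∃ k, V ≤ (S k).toSubmodule := by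
  have : ContinuousAdd V := V.toAddSubmonoid.continuousAdd
  have cover : ⋃ k, ((S k).comap V.subtypeL : Set V) = Set.univ :=
    Set.eq_univ_of_forall fun v => by simpa using hV v.2
  obtain ⟨k, hk⟩ := exists_closedSubmodule_eq_top_of_iUnion_eq_univ _ cover
  have mem_S (v : V) : v ∈ (S k).comap V.subtypeL := hk ▸ ClosedSubmodule.mem_top
  exact ⟨k, fun v hv => mem_S ⟨v, hv⟩⟩

end BaireCovering

section TailComap

variable {R E F ι : Type*} [Semiring R] [AddCommMonoid E] [TopologicalSpace E] [Module R E]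
  [AddCommMonoid F] [TopologicalSpace F] [Module R F] [Preorder ι]

/-- The vectors sent into `W` by all members of the tail `(T i)_{j ≤ i}` of a family of continuous
linear maps. It is bundled with its closedness, so that it can serve in a Baire covering. -/
def tailComap (T : ι → E →L[R] F) (W : ClosedSubmodule R F) (j : ι) : ClosedSubmodule R E :=
  ⨅ i : Set.Ici j, W.comap (T i)

variable {T : ι → E →L[R] F} {W : ClosedSubmodule R F}

theorem mem_tailComap {j : ι} {x : E} : x ∈ tailComap T W j ↔ ∀ i, j ≤ i → T i x ∈ W := by
  simp [tailComap]

theorem tailComap_mono : Monotone (tailComap T W) := fun _ _ hjk _ hx =>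
  mem_tailComap.2 fun i hi => mem_tailComap.1 hx i (hjk.trans hi)

end TailComap

theorem closed_subspace_individually_eventually_invariant_implies_uniformly_general
    {R E F ι : Type*} [Ring R] [TopologicalSpace R] [NeBot (𝓝[{r : R | IsUnit r}] 0)]
    [AddCommGroup E] [TopologicalSpace E] [ContinuousAdd E] [Module R E] [ContinuousSMul R E]
    [AddCommMonoid F] [TopologicalSpace F] [Module R F] [Preorder ι]
    (hmaj : ∃ J : Set ι, J.Countable ∧ IsCofinal J) (T : ι → E →L[R] F)
    (V : Submodule R E) [BaireSpace V] (W : ClosedSubmodule R F)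
    (hind : ∀ v ∈ V, ∃ i₀, ∀ i, i₀ ≤ i → T i v ∈ W) :
    ∃ i₀, ∀ i, i₀ ≤ i → ∀ v ∈ V, T i v ∈ W := by
  obtain ⟨J, hJ, hcof⟩ := hmaj
  have : Countable J := hJ.to_subtype
  have cover : (V : Set E) ⊆ ⋃ j : J, (tailComap T W j : Set E) := fun v hv => by
    obtain ⟨i₀, hi₀⟩ := hind v hv
    obtain ⟨j, hj, hij⟩ := hcof i₀
    exact Set.mem_iUnion.2 ⟨⟨j, hj⟩, tailComap_mono hij (mem_tailComap.2 hi₀)⟩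
  obtain ⟨j, hj⟩ := exists_le_closedSubmodule_of_subset_iUnion V _ cover
  exact ⟨j, fun i hi v hv => mem_tailComap.1 (hj hv) i hi⟩

/-- Let `E` be a Banach space, `(I, ≤)` a directed set containing a countable majorizing
subset, and `(T i)_{i ∈ I}` a family of bounded linear operators on `E`.  If a closed
vector subspace `V ⊆ E` is individually eventually invariant under the family, then it
is uniformly eventually invariant. -/
theorem closed_subspace_individually_eventually_invariant_implies_uniformly
    {E : Type*} [NormedAddCommGroup E] [NormedSpace ℝ E] [CompleteSpace E]
    {ι : Type*} [Nonempty ι] [Preorder ι] [IsDirected ι (· ≤ ·)]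
    (hmaj : ∃ J : Set ι, J.Countable ∧ ∀ i : ι, ∃ j ∈ J, i ≤ j)
    (T : ι → E →L[ℝ] E)
    (V : Submodule ℝ E) (hV : IsClosed (V : Set E))
    (hind : ∀ v ∈ V, ∃ i₀ : ι, ∀ i, i₀ ≤ i → T i v ∈ V) :
    ∃ i₀ : ι, ∀ i, i₀ ≤ i → ∀ v ∈ V, T i v ∈ V := by
  have : CompleteSpace V := hV.completeSpace_coe
  exact closed_subspace_individually_eventually_invariant_implies_uniformly_general
    hmaj T V ⟨V, hV⟩ hind
end

section
/- Let E be a Banach space, let I be a non-empty set, and for each i ∈ I let V_i ⊆ E be a vector subspace equipped with a complete norm ‖·‖_i under which the inclusion map V_i → E is continuous; moreover, for each i ∈ I let c_i > 0 be a real number. Then the vector subspace V := { v ∈ ⋂_{i ∈ I} V_i : ‖v‖_V := sup_{i ∈ I} c_i ‖v‖_i < ∞ }, equipped with the norm ‖·‖_V, is a Banach space and the inclusion map V → E is continuous; in particular, V is an operator range in E. -/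
universe u

/-- A witness that the set `S ⊆ E`, together with the norm function `nrm` (whose values
matter only on `S`), is an *operator range* in `E`: there is a Banach space `F` and an
injective bounded linear map `k : F → E` with range exactly `S`, such that the norm of
`F` is transported to `nrm` on `S`.  This expresses that `S` is a vector subspace of `E`
carrying the complete norm `nrm` under which the inclusion `S → E` is continuous. -/
structure OperatorRangeWitness (E : Type u) [NormedAddCommGroup E] [NormedSpace ℝ E]
    (S : Set E) (nrm : E → ℝ) : Type (u + 1) where
  F : Type u
  [grp : NormedAddCommGroup F]
  [mod : NormedSpace ℝ F]
  [cpl : CompleteSpace F]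
  k : F →L[ℝ] E
  inj : Function.Injective k
  range_eq : Set.range k = S
  norm_eq : ∀ f : F, ‖f‖ = nrm (k f)

/-!
Rescaling the embedding of `V i` by `(c i)⁻¹` multiplies its norm by `c i`, so one may take
`c i = 1`. The bounded families in `∏ i, V i` whose components all have the same image in `E` then
form a closed subspace of the `ℓ^∞`-product; it is complete, and the common image embeds it into `E`
with range `V` and norm `⨆ i, ‖v‖_i`.
-/

open scoped ENNReal

section BoundedFiberProduct

variable {𝕜 E I : Type*} {F : I → Type*} [NormedRing 𝕜]
  [TopologicalSpace E] [AddCommMonoid E] [Module 𝕜 E]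
  [∀ i, NormedAddCommGroup (F i)] [∀ i, Module 𝕜 (F i)] [∀ i, IsBoundedSMul 𝕜 (F i)]

/-- The bounded fibre product of continuous linear maps `k i : F i → E`: the bounded families whose
components all have the same image in `E`, as a subspace of the `ℓ^∞`-product of the `F i`. -/
noncomputable def boundedFiberProduct (k : ∀ i, F i →L[𝕜] E) : Submodule 𝕜 (lp F ∞) :=
  ⨅ (i) (j), (k i ∘L lp.evalCLM 𝕜 F ∞ i).toLinearMap.eqLocus
    (k j ∘L lp.evalCLM 𝕜 F ∞ j).toLinearMap

namespace boundedFiberProduct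

theorem mem_iff {k : ∀ i, F i →L[𝕜] E} {f : lp F ∞} :
    f ∈ boundedFiberProduct k ↔ ∀ i j, k i (f i) = k j (f j) := by
  simp only [boundedFiberProduct, Submodule.mem_iInf]
  rfl

theorem isClosed [T2Space E] (k : ∀ i, F i →L[𝕜] E) :
    IsClosed (boundedFiberProduct k : Set (lp F ∞)) := by
  simp only [boundedFiberProduct, Submodule.coe_iInf]
  exact isClosed_iInter fun _ => isClosed_iInter fun _ => ContinuousLinearMap.isClosed_eqLocus _ _

instance [T2Space E] [∀ i, CompleteSpace (F i)] (k : ∀ i, F i →L[𝕜] E) :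
    CompleteSpace (boundedFiberProduct k) :=
  (isClosed k).completeSpace_coe

/-- The structure map of the bounded fibre product to its base, computed from the `i`-th
component. -/
noncomputable def toBase (k : ∀ i, F i →L[𝕜] E) (i : I) : boundedFiberProduct k →L[𝕜] E :=
  (k i ∘L lp.evalCLM 𝕜 F ∞ i) ∘L (boundedFiberProduct k).subtypeL

theorem apply_eq_toBase {k : ∀ i, F i →L[𝕜] E} (f : boundedFiberProduct k) (i j : I) :
    k i (f.1 i) = toBase k j f :=
  mem_iff.1 f.2 i j

theorem toBase_injective {k : ∀ i, F i →L[𝕜] E} (hk : ∀ i, Function.Injective (k i)) (i : I) :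
    Function.Injective (toBase k i) := fun f g h =>
  Subtype.ext <| lp.ext <| funext fun j => hk j <|
    (apply_eq_toBase f j i).trans (h.trans (apply_eq_toBase g j i).symm)

theorem mem_range_toBase {k : ∀ i, F i →L[𝕜] E} {i : I} {v : E} :
    v ∈ Set.range (toBase k i) ↔
      ∃ x : ∀ j, F j, (∀ j, k j (x j) = v) ∧ BddAbove (Set.range fun j => ‖x j‖) := by
  constructor
  · rintro ⟨f, rfl⟩
    exact ⟨f.1, fun j => apply_eq_toBase f j i, memℓp_infty_iff.1 (lp.memℓp f.1)⟩
  · rintro ⟨x, hx, hbdd⟩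
    exact ⟨⟨⟨x, memℓp_infty hbdd⟩, mem_iff.2 fun j l => (hx j).trans (hx l).symm⟩, hx i⟩

end boundedFiberProduct

end BoundedFiberProduct

namespace OperatorRangeWitness

attribute [instance] grp mod cpl

variable {E : Type u} [NormedAddCommGroup E] [NormedSpace ℝ E]

-- Since `F` embeds into `E`, it can be shrunk to `Type u`.
theorem nonempty_of_injective {F : Type*} [NormedAddCommGroup F] [NormedSpace ℝ F]
    [CompleteSpace F] {S : Set E} {nrm : E → ℝ} (k : F →L[ℝ] E) (hinj : Function.Injective k)
    (hrange : Set.range k = S) (hnorm : ∀ f, ‖f‖ = nrm (k f)) :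
    Nonempty (OperatorRangeWitness E S nrm) := by
  have : Small.{u} F := small_of_injective hinj
  let e : Shrink.{u} F ≃ₗᵢ[ℝ] F := ⟨Shrink.linearEquiv ℝ F, fun _ => rfl⟩
  have : CompleteSpace (Shrink.{u} F) := e.toIsometryEquiv.completeSpace
  exact ⟨{
    F := Shrink.{u} F
    k := k ∘L (e.toContinuousLinearEquiv : Shrink.{u} F →L[ℝ] F)
    inj := hinj.comp e.injective
    range_eq := (e.surjective.range_comp k).trans hrange
    norm_eq := fun f => (e.norm_map f).symm.trans (hnorm (e f)) }⟩

/-- Multiplying the norm of an operator range by `c > 0`, encoded by keeping the Banach space and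
multiplying its embedding by `c⁻¹`. -/
noncomputable def rescale {S : Set E} {nrm : E → ℝ} (w : OperatorRangeWitness E S nrm)
    {c : ℝ} (hc : 0 < c) : OperatorRangeWitness E S (fun v => c * nrm v) where
  F := w.F
  k := c⁻¹ • w.k
  inj := (smul_right_injective E (inv_ne_zero hc.ne')).comp w.inj
  range_eq :=
    (congrArg SetLike.coe (w.k.toLinearMap.range_smul c⁻¹ (inv_ne_zero hc.ne'))).trans w.range_eq
  norm_eq f := calc
    ‖f‖ = c * ‖c⁻¹ • f‖ := by
      rw [norm_smul_of_nonneg (inv_nonneg.2 hc.le), mul_inv_cancel_left₀ hc.ne']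
    _ = c * nrm (c⁻¹ • w.k f) := by rw [w.norm_eq, map_smul]

theorem exists_bddAbove_norm_iff {I : Type*} {S : I → Set E} {nrm : I → E → ℝ}
    (w : ∀ i, OperatorRangeWitness E (S i) (nrm i)) {v : E} :
    (∃ x : ∀ i, (w i).F, (∀ i, (w i).k (x i) = v) ∧ BddAbove (Set.range fun i => ‖x i‖)) ↔
      (∀ i, v ∈ S i) ∧ BddAbove (Set.range fun i => nrm i v) := by
  have norm_eq_of_apply_eq {x : ∀ i, (w i).F} (hx : ∀ i, (w i).k (x i) = v) (i : I) :
      ‖x i‖ = nrm i v := by rw [(w i).norm_eq, hx i]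
  constructor
  · rintro ⟨x, hx, hbdd⟩
    exact ⟨fun i => (w i).range_eq.subset ⟨x i, hx i⟩,
      by simpa only [norm_eq_of_apply_eq hx] using hbdd⟩
  · rintro ⟨hv, hbdd⟩
    choose x hx using fun i => (w i).range_eq.superset (hv i)
    exact ⟨x, hx, by simpa only [norm_eq_of_apply_eq hx] using hbdd⟩

theorem nonempty_iInter_iSup {I : Type*} [Nonempty I] {S : I → Set E} {nrm : I → E → ℝ}
    (w : ∀ i, OperatorRangeWitness E (S i) (nrm i)) :
    Nonempty (OperatorRangeWitness E
      {v : E | (∀ i, v ∈ S i) ∧ BddAbove (Set.range fun i => nrm i v)}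
      (fun v => ⨆ i, nrm i v)) := by
  let i₀ := Classical.arbitrary I
  let k i := (w i).k
  refine nonempty_of_injective (boundedFiberProduct.toBase k i₀)
    (boundedFiberProduct.toBase_injective (fun i => (w i).inj) i₀)
    (Set.ext fun _ => boundedFiberProduct.mem_range_toBase.trans (exists_bddAbove_norm_iff w))
    fun f => ?_
  calc
    ‖f‖ = ⨆ i, ‖f.1 i‖ := lp.norm_eq_ciSup f.1
    _ = ⨆ i, nrm i (boundedFiberProduct.toBase k i₀ f) :=
      iSup_congr fun i => by
        rw [(w i).norm_eq, boundedFiberProduct.apply_eq_toBase f i i₀]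

end OperatorRangeWitness

theorem intersection_of_operator_ranges_general
    {E : Type u} [NormedAddCommGroup E] [NormedSpace ℝ E]
    {I : Type*} [Nonempty I]
    (Vset : I → Set E) (n : I → E → ℝ)
    (c : I → ℝ) (hc : ∀ i, 0 < c i)
    (w : ∀ i, OperatorRangeWitness E (Vset i) (n i)) :
    Nonempty (OperatorRangeWitness E
      {v : E | (∀ i, v ∈ Vset i) ∧ BddAbove (Set.range fun i => c i * n i v)}
      (fun v => ⨆ i, c i * n i v)) :=
  OperatorRangeWitness.nonempty_iInter_iSup fun i => (w i).rescale (hc i)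

/-- Let `E` be a Banach space, `I` a non-empty index set and, for each `i ∈ I`, let
`Vset i ⊆ E` be a vector subspace equipped with a complete norm `n i` making the
inclusion `Vset i → E` continuous, and let `c i > 0`.  Then the subspace
`V = { v ∈ ⋂ i, Vset i : sup_i c i * n i v < ∞ }`, equipped with the norm
`v ↦ ⨆ i, c i * n i v`, is a Banach space whose inclusion into `E` is continuous;
in particular it is an operator range in `E`. -/
theorem intersection_of_operator_ranges
    {E : Type u} [NormedAddCommGroup E] [NormedSpace ℝ E] [CompleteSpace E]
    {I : Type*} [Nonempty I]
    (Vset : I → Set E) (n : I → E → ℝ)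
    (c : I → ℝ) (hc : ∀ i, 0 < c i)
    (w : ∀ i, OperatorRangeWitness E (Vset i) (n i)) :
    Nonempty (OperatorRangeWitness E
      {v : E | (∀ i, v ∈ Vset i) ∧ BddAbove (Set.range fun i => c i * n i v)}
      (fun v => ⨆ i, c i * n i v)) := by
  exact intersection_of_operator_ranges_general Vset n c hc w
end

section
/- Let E and F be Banach spaces, let (I, ≤) be a directed set that contains a countable majorizing subset, and let (T_i)_{i ∈ I} be a family of bounded linear operators from E to F. Let W ⊆ F be an operator range, endowed with a complete norm ‖·‖_W making the inclusion W → F continuous. Then the following are equivalent: (i) there exists i₀ ∈ I such that T_i E ⊆ W for all i ≥ i₀; (ii) there exist real numbers c_i ≥ 0 (i ∈ I) such that for each x ∈ E there exists i₀ ∈ I with T_i x ∈ W and ‖T_i x‖_W ≤ c_i ‖x‖_E for all i ≥ i₀. -/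
universe u

/-!
Both conditions are governed by the fibre product `{(x, w) | T x = k w}` of a bounded operator `T`
with the inclusion `k` of the operator range. It is a Banach space, and its projection to `E` has
range `T⁻¹ W`. If `T` maps into `W`, the projection is onto and the open mapping theorem bounds
`‖T x‖_W` by a multiple of `‖x‖`. Conversely, if `T i x ∈ W` eventually for each `x`, then Baire's
theorem along the countable majorizing subset gives a `j` such that `(T i)⁻¹ W` is non-meagre for
every `i ≥ j`; and a bounded operator on a Banach space with non-meagre range is onto, because in
the proof of the open mapping theorem surjectivity only serves to make the range non-meagre.
-/

open Filter Function Metric Set Topology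

section NonmeagreRange

variable {𝕜 E F : Type*} [NontriviallyNormedField 𝕜]

theorem not_isMeagre_image_of_mem_nhds_zero
    [AddCommGroup E] [Module 𝕜 E] [TopologicalSpace E] [ContinuousSMul 𝕜 E]
    [AddCommGroup F] [Module 𝕜 F] [TopologicalSpace F] [ContinuousConstSMul 𝕜 F]
    {f : E →ₗ[𝕜] F} (hf : ¬ IsMeagre (range f)) {U : Set E} (hU : U ∈ 𝓝 0) :
    ¬ IsMeagre (f '' U) := by
  intro hfU
  obtain ⟨c, hc⟩ := NormedField.exists_one_lt_norm 𝕜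
  have hc0 : c ≠ 0 := norm_pos_iff.1 (one_pos.trans hc)
  have hscaled (n : ℕ) : IsMeagre ((c ^ n • ·) '' (f '' U)) :=
    (Homeomorph.smulOfNeZero (c ^ n) (pow_ne_zero n hc0)).isInducing.isMeagre_image hfU
  refine hf ((isMeagre_iUnion hscaled).mono ?_)
  rintro _ ⟨x, rfl⟩
  have hlim : Tendsto (fun n : ℕ ↦ c⁻¹ ^ n • x) atTop (𝓝 0) := by
    have hc' : ‖c⁻¹‖ < 1 := by simpa using inv_lt_one_of_one_lt₀ hc
    simpa using (tendsto_pow_atTop_nhds_zero_of_norm_lt_one hc').smul_const x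
  obtain ⟨n, hn⟩ := (hlim.eventually_mem hU).exists
  refine mem_iUnion.2 ⟨n, _, mem_image_of_mem f hn, ?_⟩
  simp [hc0]

theorem closure_image_mem_nhds_zero_of_not_isMeagre_range
    [AddCommGroup E] [Module 𝕜 E] [TopologicalSpace E] [IsTopologicalAddGroup E]
    [ContinuousSMul 𝕜 E]
    [AddCommGroup F] [Module 𝕜 F] [TopologicalSpace F] [IsTopologicalAddGroup F]
    [ContinuousConstSMul 𝕜 F]
    {f : E →ₗ[𝕜] F} (hf : ¬ IsMeagre (range f)) {U : Set E} (hU : U ∈ 𝓝 0) :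
    closure (f '' U) ∈ 𝓝 0 := by
  obtain ⟨V, hV, hVU⟩ := exists_nhds_half_neg hU
  obtain ⟨a, ha⟩ : (interior (closure (f '' V))).Nonempty := nonempty_iff_ne_empty.2
    fun h ↦ not_isMeagre_image_of_mem_nhds_zero hf hV (IsNowhereDense.isMeagre h)
  have hshift : ∀ᶠ y in 𝓝 (0 : F), a + y ∈ closure (f '' V) :=
    (continuous_const_add a).tendsto' 0 a (add_zero a)
      |>.eventually_mem (mem_interior_iff_mem_nhds.1 ha)
  filter_upwards [hshift] with y hy
  rw [← add_sub_cancel_left a y]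
  refine map_mem_closure₂ continuous_sub hy (interior_subset ha) ?_
  rintro _ ⟨v, hv, rfl⟩ _ ⟨w, hw, rfl⟩
  exact ⟨v - w, hVU v hv w hw, map_sub f v w⟩

theorem tendsto_zero_of_mem_closure_image_ball
    [SeminormedAddCommGroup E] [AddCommGroup F] [TopologicalSpace F] [IsTopologicalAddGroup F]
    {f : E →+ F} (hf : Continuous f) {α : Type*} {l : Filter α} {r : α → ℝ}
    (hr : Tendsto r l (𝓝 0)) {z : α → F} (hz : ∀ a, z a ∈ closure (f '' ball 0 (r a))) :
    Tendsto z l (𝓝 0) := by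
  refine (closed_nhds_basis 0).tendsto_right_iff.2 fun V ⟨hV, hVc⟩ ↦ ?_
  obtain ⟨ε, hε, hball⟩ := Metric.mem_nhds_iff.1 (hf.tendsto' 0 0 (map_zero f) hV)
  filter_upwards [hr.eventually_lt_const hε] with a ha
  exact closure_minimal (image_subset_iff.2 ((ball_subset_ball ha.le).trans hball)) hVc (hz a)

theorem closure_image_ball_subset_image_closedBall
    [SeminormedAddCommGroup E] [CompleteSpace E]
    [AddCommGroup F] [TopologicalSpace F] [IsTopologicalAddGroup F] [T2Space F]
    {f : E →+ F} (hf : Continuous f) (hopen : ∀ r > 0, closure (f '' ball 0 r) ∈ 𝓝 0)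
    {r : ℝ} (hr : 0 < r) :
    closure (f '' ball 0 r) ⊆ f '' closedBall 0 (2 * r) := by
  intro y hy
  let ρ (n : ℕ) : ℝ := 2 * r / 2 / 2 ^ n
  have hρ : HasSum ρ (2 * r) := hasSum_geometric_two' (2 * r)
  have happrox (n : ℕ) (z : F) (hz : z ∈ closure (f '' ball 0 (ρ n))) :
      ∃ x ∈ ball 0 (ρ n), z - f x ∈ closure (f '' ball 0 (ρ (n + 1))) := by
    obtain ⟨_, ⟨x, hx, rfl⟩, hxz⟩ :=
      mem_closure_iff_nhds_zero.1 hz _ (neg_mem_nhds_zero F (hopen (ρ (n + 1)) (by positivity)))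
    exact ⟨x, hx, by simpa using hxz⟩
  choose! g hg hres using happrox
  -- Successive approximation: `z n` is the part of `y` not yet attained after `n` steps.
  let z (n : ℕ) : F := Nat.rec y (fun n w ↦ w - f (g n w)) n
  have hz (n : ℕ) : z n ∈ closure (f '' ball 0 (ρ n)) := by
    induction n with
    | zero => simpa [z, ρ] using hy
    | succ n ih => exact hres n (z n) ih
  let x (n : ℕ) : E := g n (z n)
  have hx (n : ℕ) : ‖x n‖ ≤ ρ n := (mem_ball_zero_iff.1 (hg n (z n) (hz n))).le
  have hfx (n : ℕ) : f (x n) = z n - z (n + 1) := (sub_sub_cancel (z n) (f (x n))).symm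
  have hpartial (n : ℕ) : ∑ i ∈ Finset.range n, f (x i) = y - z n :=
    (Finset.sum_congr rfl fun i _ ↦ hfx i).trans (Finset.sum_range_sub' z n)
  have hsum : HasSum x (∑' n, x n) := (Summable.of_norm_bounded hρ.summable hx).hasSum
  refine ⟨∑' n, x n, mem_closedBall_zero_iff.2 (tsum_of_norm_bounded hρ hx), ?_⟩
  refine tendsto_nhds_unique (hsum.map f hf).tendsto_sum_nat ?_
  simpa only [comp_apply, hpartial, sub_zero] using
    (tendsto_zero_of_mem_closure_image_ball hf hρ.summable.tendsto_atTop_zero hz).const_sub y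

theorem surjective_of_not_isMeagre_range
    [NormedAddCommGroup E] [NormedSpace 𝕜 E] [CompleteSpace E]
    [AddCommGroup F] [Module 𝕜 F] [TopologicalSpace F] [IsTopologicalAddGroup F]
    [ContinuousSMul 𝕜 F] [T2Space F]
    (f : E →L[𝕜] F) (hf : ¬ IsMeagre (range f)) : Surjective f := by
  have hopen (r : ℝ) (hr : r > 0) : closure (f '' ball 0 r) ∈ 𝓝 0 :=
    closure_image_mem_nhds_zero_of_not_isMeagre_range (f := f.toLinearMap) hf (ball_mem_nhds 0 hr)
  have hrange : range f ∈ 𝓝 0 := mem_of_superset (hopen 1 one_pos) <|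
    (closure_image_ball_subset_image_closedBall (f := (f : E →+ F)) f.continuous hopen
      one_pos).trans (image_subset_range _ _)
  exact LinearMap.range_eq_top.1 <| Submodule.eq_top_of_nonempty_interior' _
    ⟨0, mem_interior_iff_mem_nhds.2 hrange⟩

end NonmeagreRange

section FiberProduct

variable {𝕜 E F G : Type*} [NontriviallyNormedField 𝕜]
  [NormedAddCommGroup E] [NormedSpace 𝕜 E] [NormedAddCommGroup G] [NormedSpace 𝕜 G]
  [AddCommMonoid F] [Module 𝕜 F] [TopologicalSpace F]

/-- The fibre product `E ×_F G` of two operators `T : E → F` and `k : G → F`, as a subspace of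
`E × G`. When `k` is injective it is the graph of the partially defined operator `k⁻¹ T`. -/
def fiberProduct (T : E →L[𝕜] F) (k : G →L[𝕜] F) : Submodule 𝕜 (E × G) :=
  LinearMap.eqLocus (T.toLinearMap ∘ₗ LinearMap.fst 𝕜 E G) (k.toLinearMap ∘ₗ LinearMap.snd 𝕜 E G)

namespace fiberProduct

/-- The projection of the fibre product `E ×_F G` to its first factor. -/
def fst (T : E →L[𝕜] F) (k : G →L[𝕜] F) : fiberProduct T k →L[𝕜] E :=
  (ContinuousLinearMap.fst 𝕜 E G).comp (fiberProduct T k).subtypeL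

theorem range_fst (T : E →L[𝕜] F) (k : G →L[𝕜] F) : range (fst T k) = T ⁻¹' range k := by
  ext x
  constructor
  · rintro ⟨⟨⟨_, w⟩, hw⟩, rfl⟩
    exact ⟨w, Eq.symm hw⟩
  · rintro ⟨w, hw⟩
    exact ⟨⟨(x, w), hw.symm⟩, rfl⟩

theorem isClosed [T2Space F] (T : E →L[𝕜] F) (k : G →L[𝕜] F) :
    IsClosed (fiberProduct T k : Set (E × G)) :=
  isClosed_eq (T.continuous.comp continuous_fst) (k.continuous.comp continuous_snd)

instance [CompleteSpace E] [CompleteSpace G] [T2Space F] (T : E →L[𝕜] F) (k : G →L[𝕜] F) :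
    CompleteSpace (fiberProduct T k) :=
  (isClosed T k).completeSpace_coe

end fiberProduct

variable [CompleteSpace E] [CompleteSpace G] [T2Space F]

theorem forall_mem_range_of_not_isMeagre_preimage_range {T : E →L[𝕜] F} {k : G →L[𝕜] F}
    (h : ¬ IsMeagre (T ⁻¹' range k)) (x : E) : T x ∈ range k := by
  rw [← fiberProduct.range_fst] at h
  rw [← mem_preimage, ← fiberProduct.range_fst]
  exact surjective_of_not_isMeagre_range _ h x

theorem exists_preimage_norm_le_of_forall_mem_range {T : E →L[𝕜] F} {k : G →L[𝕜] F}
    (h : ∀ x, T x ∈ range k) : ∃ C > 0, ∀ x, ∃ w, k w = T x ∧ ‖w‖ ≤ C * ‖x‖ := by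
  have hsurj : Surjective (fiberProduct.fst T k) := fun x ↦ by
    rw [← mem_range, fiberProduct.range_fst]
    exact h x
  obtain ⟨C, hC, hpre⟩ := (fiberProduct.fst T k).exists_preimage_norm_le hsurj
  refine ⟨C, hC, fun x ↦ ?_⟩
  obtain ⟨⟨⟨_, w⟩, hw⟩, rfl, hle⟩ := hpre x
  exact ⟨w, Eq.symm hw, (norm_snd_le _).trans hle⟩

end FiberProduct

theorem exists_not_isMeagre_setOf_forall_ge {ι X : Type*} [Preorder ι]
    [TopologicalSpace X] [BaireSpace X] [Nonempty X]
    (hmaj : ∃ J : Set ι, J.Countable ∧ ∀ i, ∃ j ∈ J, i ≤ j) {p : ι → X → Prop}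
    (h : ∀ x, ∃ i₀, ∀ i, i₀ ≤ i → p i x) : ∃ j, ¬ IsMeagre {x | ∀ i, j ≤ i → p i x} := by
  obtain ⟨J, hJ, hmaj⟩ := hmaj
  have hcover : ⋃ j ∈ J, {x | ∀ i, j ≤ i → p i x} = univ := by
    refine eq_univ_of_forall fun x ↦ ?_
    obtain ⟨i₀, hi₀⟩ := h x
    obtain ⟨j, hjJ, hj⟩ := hmaj i₀
    exact mem_biUnion hjJ fun i hi ↦ hi₀ i (hj.trans hi)
  obtain ⟨j, -, hj⟩ := exists_of_not_isMeagre_biUnion hJ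
    (hcover ▸ not_isMeagre_of_isOpen isOpen_univ univ_nonempty)
  exact ⟨j, hj⟩

theorem mem_range_and_le_iff {α β R : Type*} [LE R] {k : α → β} {p : α → R} {q : β → R}
    (hpq : ∀ a, p a = q (k a)) {b : β} {C : R} :
    b ∈ range k ∧ q b ≤ C ↔ ∃ a, k a = b ∧ p a ≤ C := by
  constructor
  · rintro ⟨⟨a, rfl⟩, h⟩
    exact ⟨a, rfl, (hpq a).trans_le h⟩
  · rintro ⟨a, rfl, h⟩
    exact ⟨mem_range_self a, hpq a ▸ h⟩

theorem eventually_mapsInto_operator_range_iff_general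
    {𝕜 E F G ι : Type*} [NontriviallyNormedField 𝕜]
    [NormedAddCommGroup E] [NormedSpace 𝕜 E] [CompleteSpace E]
    [NormedAddCommGroup G] [NormedSpace 𝕜 G] [CompleteSpace G]
    [AddCommMonoid F] [Module 𝕜 F] [TopologicalSpace F] [T2Space F] [Preorder ι]
    (hmaj : ∃ J : Set ι, J.Countable ∧ ∀ i : ι, ∃ j ∈ J, i ≤ j)
    (T : ι → E →L[𝕜] F) (k : G →L[𝕜] F) :
    (∃ i₀ : ι, ∀ i, i₀ ≤ i → ∀ x : E, T i x ∈ range k) ↔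
    (∃ c : ι → ℝ, (∀ i, 0 ≤ c i) ∧
      ∀ x : E, ∃ i₀ : ι, ∀ i, i₀ ≤ i → ∃ w, k w = T i x ∧ ‖w‖ ≤ c i * ‖x‖) := by
  constructor
  · rintro ⟨i₀, hi₀⟩
    have hbound (i : ι) : ∃ C ≥ 0, i₀ ≤ i → ∀ x, ∃ w, k w = T i x ∧ ‖w‖ ≤ C * ‖x‖ := by
      by_cases hi : i₀ ≤ i
      · obtain ⟨C, hC, hw⟩ := exists_preimage_norm_le_of_forall_mem_range (hi₀ i hi)
        exact ⟨C, hC.le, fun _ ↦ hw⟩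
      · exact ⟨0, le_rfl, fun h ↦ absurd h hi⟩
    choose c hc0 hc using hbound
    exact ⟨c, hc0, fun x ↦ ⟨i₀, fun i hi ↦ hc i hi x⟩⟩
  · rintro ⟨c, -, hc⟩
    have hmem (x : E) : ∃ i₀, ∀ i, i₀ ≤ i → T i x ∈ range k :=
      (hc x).imp fun _ hi₀ i hi ↦ (hi₀ i hi).imp fun _ ↦ And.left
    obtain ⟨j, hj⟩ := exists_not_isMeagre_setOf_forall_ge hmaj hmem
    exact ⟨j, fun i hi ↦ forall_mem_range_of_not_isMeagre_preimage_range
      fun hmeagre ↦ hj (hmeagre.mono fun x hx ↦ hx i hi)⟩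

/-- Let `E, F` be Banach spaces, `(ι, ≤)` a directed set containing a countable majorizing
subset, and `(T i)` a family of bounded operators from `E` to `F`.  Let `W ⊆ F` be an
operator range with complete norm `nW`.  Then the following are equivalent:
(i) there is `i₀` such that `T i E ⊆ W` for all `i ≥ i₀`;
(ii) there are numbers `c i ≥ 0` such that for each `x ∈ E` there is `i₀` with
`T i x ∈ W` and `nW (T i x) ≤ c i * ‖x‖` for all `i ≥ i₀`. -/
theorem eventually_mapsInto_operator_range_iff
    {E : Type u} {F : Type u}
    [NormedAddCommGroup E] [NormedSpace ℝ E] [CompleteSpace E]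
    [NormedAddCommGroup F] [NormedSpace ℝ F] [CompleteSpace F]
    {ι : Type*} [Nonempty ι] [Preorder ι] [IsDirected ι (· ≤ ·)]
    (hmaj : ∃ J : Set ι, J.Countable ∧ ∀ i : ι, ∃ j ∈ J, i ≤ j)
    (T : ι → E →L[ℝ] F)
    (Wset : Set F) (nW : F → ℝ)
    (wW : OperatorRangeWitness F Wset nW) :
    (∃ i₀ : ι, ∀ i, i₀ ≤ i → ∀ x : E, T i x ∈ Wset) ↔
    (∃ c : ι → ℝ, (∀ i, 0 ≤ c i) ∧
      ∀ x : E, ∃ i₀ : ι, ∀ i, i₀ ≤ i → T i x ∈ Wset ∧ nW (T i x) ≤ c i * ‖x‖) := by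
  obtain ⟨G, k, -, rfl, hnorm⟩ := wW
  simpa only [mem_range_and_le_iff hnorm] using
    eventually_mapsInto_operator_range_iff_general hmaj T k
end

section
/- Let E be a Banach space, let (I, ≤) be a directed set that contains a countable majorizing subset, and let (T_i)_{i ∈ I} be a family of bounded linear operators on E. Let V ⊆ E be an operator range, endowed with a complete norm ‖·‖_V making the inclusion V → E continuous. Then the following are equivalent: (i) V is uniformly eventually invariant under (T_i), i.e., there exists i₀ ∈ I such that T_i V ⊆ V for all i ≥ i₀; (ii) there exist real numbers c_i ≥ 0 (i ∈ I) such that for each v ∈ V there exists i₀ ∈ I with T_i v ∈ V and ‖T_i v‖_V ≤ c_i ‖v‖_V for all i ≥ i₀. -/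
universe u

/-!
The fibre product of two bounded operators `S : F → E` and `k : W → E` on Banach spaces is a Banach
space, and its projection to `F` has range `S ⁻¹' (range k)`. By the open mapping theorem for
operators with nonmeagre range, this preimage is therefore either meagre or all of `F`, and in the
latter case points of the range of `S` lift to `W` with control of the norm. If each point of `F` is
eventually mapped into `range k` by a family `S i`, then Baire's theorem along the countable
majorizing set gives a single index beyond which all the preimages are nonmeagre.
-/

open Filter Function Metric Set Topology

theorem exists_eq_zero_of_forall_exists_le_mul {X : Type*} [PseudoMetricSpace X] [CompleteSpace X]
    [Nonempty X] {φ : X → ℝ} (hφ : Continuous φ) (hφ₀ : ∀ x, 0 ≤ φ x) {r C : ℝ} (hr₀ : 0 ≤ r)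
    (hr₁ : r < 1) (hC : 0 ≤ C) (h : ∀ x, ∃ x', φ x' ≤ r * φ x ∧ dist x x' ≤ C * φ x) :
    ∃ x, φ x = 0 := by
  choose g hgφ hg using h
  obtain ⟨x₀⟩ := ‹Nonempty X›
  have decay (n : ℕ) : φ (g^[n] x₀) ≤ r ^ n * φ x₀ := by
    induction n with
    | zero => simp
    | succ n ih =>
      rw [iterate_succ_apply', pow_succ', mul_assoc]
      exact (hgφ _).trans (by gcongr)
  have cauchy : CauchySeq fun n => g^[n] x₀ := by
    refine cauchySeq_of_le_geometric r (C * φ x₀) hr₁ fun n => ?_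
    rw [iterate_succ_apply']
    calc
      dist (g^[n] x₀) (g (g^[n] x₀)) ≤ C * φ (g^[n] x₀) := hg _
      _ ≤ C * (r ^ n * φ x₀) := by gcongr; exact decay n
      _ = C * φ x₀ * r ^ n := by ring
  obtain ⟨x, hx⟩ := cauchySeq_tendsto_of_complete cauchy
  have bound_tendsto : Tendsto (fun n => r ^ n * φ x₀) atTop (𝓝 0) := by
    simpa using (tendsto_pow_atTop_nhds_zero_of_lt_one hr₀ hr₁).mul_const (φ x₀)
  exact ⟨x, tendsto_nhds_unique ((hφ.tendsto x).comp hx)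
    (squeeze_zero (fun _ => hφ₀ _) decay bound_tendsto)⟩

section NonmeagreRange

theorem exists_closure_image_ball_mem_nhds_zero {W F : Type*} [SeminormedAddCommGroup W]
    [AddCommGroup F] [TopologicalSpace F] [IsTopologicalAddGroup F] (L : W →+ F)
    (hL : ¬ IsMeagre (range L)) : ∃ r : ℝ, closure (L '' ball 0 r) ∈ 𝓝 0 := by
  obtain ⟨n, hn⟩ : ∃ n : ℕ, ¬ IsMeagre (L '' ball 0 n) := by
    contrapose! hL
    simpa only [← image_iUnion, iUnion_ball_nat, image_univ] using isMeagre_iUnion hL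
  obtain ⟨a, ha⟩ : (interior (closure (L '' ball 0 n))).Nonempty := by
    contrapose! hn
    exact IsNowhereDense.isMeagre hn
  refine ⟨n + n, mem_of_superset
    (mem_interior_iff_mem_nhds.1 (subset_interior_sub ⟨a, ha, a, ha, sub_self a⟩)) ?_⟩
  rintro _ ⟨y, hy, z, hz, rfl⟩
  refine map_mem_closure₂ continuous_sub hy hz ?_
  rintro _ ⟨u, hu, rfl⟩ _ ⟨v, hv, rfl⟩
  rw [mem_ball_zero_iff] at hu hv
  exact ⟨u - v, mem_ball_zero_iff.2 ((norm_sub_le u v).trans_lt (add_lt_add hu hv)), map_sub L u v⟩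

variable {𝕜 W F : Type*} [NontriviallyNormedField 𝕜]
  [SeminormedAddCommGroup W] [NormedSpace 𝕜 W] [NormedAddCommGroup F] [NormedSpace 𝕜 F]

theorem exists_approx_preimage_of_closure_image_ball_mem_nhds_zero (L : W →ₗ[𝕜] F) {r : ℝ}
    (hL : closure (L '' ball 0 r) ∈ 𝓝 0) :
    ∃ C ≥ 0, ∀ y, ∃ x, ‖y - L x‖ ≤ 1 / 2 * ‖y‖ ∧ ‖x‖ ≤ C * ‖y‖ := by
  obtain ⟨ε, hε, hball⟩ := Metric.mem_nhds_iff.1 hL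
  obtain ⟨c, hc⟩ := NormedField.exists_one_lt_norm 𝕜
  have hr : 0 ≤ r := by
    by_contra! hr
    have : ball (0 : F) ε ⊆ ∅ := by simpa [ball_eq_empty.2 hr.le] using hball
    exact this (mem_ball_self hε)
  refine ⟨ε⁻¹ * ‖c‖ * r, by positivity, fun y => ?_⟩
  obtain rfl | hy := eq_or_ne y 0
  · exact ⟨0, by simp⟩
  obtain ⟨d, hd, hdy, -, hd_inv⟩ := rescale_to_shell hc hε hy
  have hd₀ : 0 < ‖d‖ := norm_pos_iff.2 hd
  obtain ⟨_, ⟨x, hx, rfl⟩, hxy⟩ := Metric.mem_closure_iff.1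
    (hball (mem_ball_zero_iff.2 hdy)) (‖d‖ * (1 / 2 * ‖y‖)) (by positivity)
  refine ⟨d⁻¹ • x, ?_, ?_⟩
  · calc
      ‖y - L (d⁻¹ • x)‖ = ‖d‖⁻¹ * ‖d • y - L x‖ := by
        rw [← norm_inv, ← norm_smul, smul_sub, inv_smul_smul₀ hd, map_smul]
      _ ≤ ‖d‖⁻¹ * (‖d‖ * (1 / 2 * ‖y‖)) := by
        rw [← dist_eq_norm]
        gcongr
      _ = 1 / 2 * ‖y‖ := inv_mul_cancel_left₀ hd₀.ne' _
  · calc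
      ‖d⁻¹ • x‖ = ‖d‖⁻¹ * ‖x‖ := by rw [norm_smul, norm_inv]
      _ ≤ ε⁻¹ * ‖c‖ * ‖y‖ * r := by
        gcongr
        exact (mem_ball_zero_iff.1 hx).le
      _ = ε⁻¹ * ‖c‖ * r * ‖y‖ := by ring

theorem surjective_of_not_isMeagre_range_s4 [CompleteSpace W] (L : W →L[𝕜] F)
    (hL : ¬ IsMeagre (range L)) : Surjective L := by
  obtain ⟨r, hr⟩ := exists_closure_image_ball_mem_nhds_zero (L : W →+ F) hL
  obtain ⟨C, hC, approx⟩ :=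
    exists_approx_preimage_of_closure_image_ball_mem_nhds_zero (L : W →ₗ[𝕜] F) hr
  intro y
  obtain ⟨x, hx⟩ : ∃ x, ‖y - L x‖ = 0 := by
    refine exists_eq_zero_of_forall_exists_le_mul (by fun_prop) (fun _ => norm_nonneg _)
      (r := 1 / 2) (by norm_num) (by norm_num) hC fun x => ?_
    obtain ⟨u, hu, hu'⟩ := approx (y - L x)
    exact ⟨x + u, by simpa [sub_sub] using hu, by simpa using hu'⟩
  exact ⟨x, (sub_eq_zero.1 (norm_eq_zero.1 hx)).symm⟩

end NonmeagreRange

section FibreProduct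

variable {𝕜 E F W : Type*} [NontriviallyNormedField 𝕜]
  [AddCommGroup E] [Module 𝕜 E] [TopologicalSpace E]
  [NormedAddCommGroup F] [NormedSpace 𝕜 F] [NormedAddCommGroup W] [NormedSpace 𝕜 W]

/-- The fibre product `{(f, w) | S f = k w}` of two operators into the same space, as
a subspace of `F × W`: the graph of `f ↦ k⁻¹ (S f)`, a relation when `k` is not injective. -/
def fibreProduct (S : F →L[𝕜] E) (k : W →L[𝕜] E) : Submodule 𝕜 (F × W) :=
  (S.comp (.fst 𝕜 F W)).toLinearMap.eqLocus (k.comp (.snd 𝕜 F W)).toLinearMap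

/-- The projection of the fibre product of `S` and `k` to the domain of `S`. Surjectivity of this
map is the inclusion `range S ⊆ range k`, so open mapping theorems apply to that inclusion. -/
def fibreProductFst (S : F →L[𝕜] E) (k : W →L[𝕜] E) : fibreProduct S k →L[𝕜] F :=
  (ContinuousLinearMap.fst 𝕜 F W).comp (fibreProduct S k).subtypeL

theorem mem_fibreProduct {S : F →L[𝕜] E} {k : W →L[𝕜] E} {p : F × W} :
    p ∈ fibreProduct S k ↔ S p.1 = k p.2 :=
  Iff.rfl

instance completeSpace_fibreProduct [T2Space E] [CompleteSpace F] [CompleteSpace W]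
    (S : F →L[𝕜] E) (k : W →L[𝕜] E) : CompleteSpace (fibreProduct S k) :=
  ContinuousLinearMap.completeSpace_eqLocus _ _

theorem range_fibreProductFst (S : F →L[𝕜] E) (k : W →L[𝕜] E) :
    range (fibreProductFst S k) = S ⁻¹' range k := by
  ext f
  constructor
  · rintro ⟨⟨⟨f, w⟩, h⟩, rfl⟩
    exact ⟨w, (mem_fibreProduct.1 h).symm⟩
  · rintro ⟨w, h⟩
    exact ⟨⟨(f, w), mem_fibreProduct.2 h.symm⟩, rfl⟩

theorem surjective_fibreProductFst_iff {S : F →L[𝕜] E} {k : W →L[𝕜] E} :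
    Surjective (fibreProductFst S k) ↔ range S ⊆ range k := by
  rw [← range_eq_univ, range_fibreProductFst, preimage_eq_univ_iff]

variable [T2Space E] [CompleteSpace F] [CompleteSpace W]

theorem range_subset_range_of_not_isMeagre_preimage {S : F →L[𝕜] E} {k : W →L[𝕜] E}
    (h : ¬ IsMeagre (S ⁻¹' range k)) : range S ⊆ range k := by
  rw [← range_fibreProductFst] at h
  exact surjective_fibreProductFst_iff.1 (surjective_of_not_isMeagre_range_s4 _ h)

theorem exists_preimage_norm_le_of_range_subset_range {S : F →L[𝕜] E} {k : W →L[𝕜] E}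
    (h : range S ⊆ range k) : ∃ C ≥ 0, ∀ f, ∃ w, k w = S f ∧ ‖w‖ ≤ C * ‖f‖ := by
  obtain ⟨C, hC, lift⟩ :=
    (fibreProductFst S k).exists_preimage_norm_le (surjective_fibreProductFst_iff.2 h)
  refine ⟨C, hC.le, fun f => ?_⟩
  obtain ⟨⟨⟨_, w⟩, hw⟩, rfl, hle⟩ := lift f
  exact ⟨w, (mem_fibreProduct.1 hw).symm, (norm_snd_le _).trans hle⟩

theorem exists_forall_ge_range_subset_range {ι : Type*} [Preorder ι]
    (hmaj : ∃ J : Set ι, J.Countable ∧ ∀ i : ι, ∃ j ∈ J, i ≤ j)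
    {S : ι → F →L[𝕜] E} {k : W →L[𝕜] E}
    (h : ∀ f, ∃ i₀, ∀ i, i₀ ≤ i → S i f ∈ range k) :
    ∃ i₀, ∀ i, i₀ ≤ i → range (S i) ⊆ range k := by
  obtain ⟨J, hJ, hmaj⟩ := hmaj
  have cover : ⋃ j ∈ J, {f | ∀ i, j ≤ i → S i f ∈ range k} = univ := by
    refine eq_univ_of_forall fun f => ?_
    obtain ⟨i₀, hi₀⟩ := h f
    obtain ⟨j, hjJ, hj⟩ := hmaj i₀
    exact mem_biUnion hjJ fun i hi => hi₀ i (hj.trans hi)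
  obtain ⟨j, -, hj⟩ := exists_of_not_isMeagre_biUnion hJ
    (cover ▸ not_isMeagre_of_isOpen isOpen_univ univ_nonempty)
  exact ⟨j, fun i hi => range_subset_range_of_not_isMeagre_preimage
    fun hmeagre => hj (hmeagre.mono fun f hf => hf i hi)⟩

theorem operator_range_uniformly_eventually_invariant_iff_general {ι : Type*} [Preorder ι]
    (hmaj : ∃ J : Set ι, J.Countable ∧ ∀ i : ι, ∃ j ∈ J, i ≤ j)
    (S : ι → F →L[𝕜] E) (k : W →L[𝕜] E) :
    (∃ i₀, ∀ i, i₀ ≤ i → range (S i) ⊆ range k) ↔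
    (∃ c : ι → ℝ, (∀ i, 0 ≤ c i) ∧
      ∀ f, ∃ i₀, ∀ i, i₀ ≤ i → ∃ w, k w = S i f ∧ ‖w‖ ≤ c i * ‖f‖) := by
  constructor
  · rintro ⟨i₀, hi₀⟩
    have bound (i : ι) : ∃ C ≥ 0, i₀ ≤ i → ∀ f, ∃ w, k w = S i f ∧ ‖w‖ ≤ C * ‖f‖ := by
      by_cases hi : i₀ ≤ i
      · obtain ⟨C, hC, lift⟩ := exists_preimage_norm_le_of_range_subset_range (hi₀ i hi)
        exact ⟨C, hC, fun _ => lift⟩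
      · exact ⟨0, le_rfl, fun h => absurd h hi⟩
    choose c hc lift using bound
    exact ⟨c, hc, fun f => ⟨i₀, fun i hi => lift i hi f⟩⟩
  · rintro ⟨c, -, h⟩
    refine exists_forall_ge_range_subset_range hmaj fun f => ?_
    obtain ⟨i₀, hi₀⟩ := h f
    exact ⟨i₀, fun i hi => (hi₀ i hi).imp fun _ hw => hw.1⟩

end FibreProduct

/-- Let `E` be a Banach space, `(ι, ≤)` a directed set containing a countable majorizing
subset, and `(T i)` a family of bounded operators on `E`.  Let `V ⊆ E` be an operator
range with complete norm `nV`.  Then the following are equivalent: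
(i) `V` is uniformly eventually invariant under `(T i)`;
(ii) there are numbers `c i ≥ 0` such that for each `v ∈ V` there is `i₀` with
`T i v ∈ V` and `nV (T i v) ≤ c i * nV v` for all `i ≥ i₀`. -/
theorem operator_range_uniformly_eventually_invariant_iff
    {E : Type u} [NormedAddCommGroup E] [NormedSpace ℝ E] [CompleteSpace E]
    {ι : Type*} [Nonempty ι] [Preorder ι] [IsDirected ι (· ≤ ·)]
    (hmaj : ∃ J : Set ι, J.Countable ∧ ∀ i : ι, ∃ j ∈ J, i ≤ j)
    (T : ι → E →L[ℝ] E)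
    (Vset : Set E) (nV : E → ℝ)
    (wV : OperatorRangeWitness E Vset nV) :
    (∃ i₀ : ι, ∀ i, i₀ ≤ i → ∀ v ∈ Vset, T i v ∈ Vset) ↔
    (∃ c : ι → ℝ, (∀ i, 0 ≤ c i) ∧
      ∀ v ∈ Vset, ∃ i₀ : ι, ∀ i, i₀ ≤ i → T i v ∈ Vset ∧ nV (T i v) ≤ c i * nV v) := by
  obtain ⟨F, k, -, rfl, hnorm⟩ := wV
  have preimage_le_iff (w : F) (v : E) (a : ℝ) : k w = v ∧ nV (k w) ≤ a ↔ k w = v ∧ nV v ≤ a :=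
    and_congr_right fun hw => by rw [hw]
  simpa [range_subset_iff, hnorm, preimage_le_iff] using
    operator_range_uniformly_eventually_invariant_iff_general hmaj (fun i => (T i).comp k) k
end

section
/- Let K be a non-empty compact Hausdorff space and let (T_t)_{t ≥ 0} be an individually eventually positive C₀-semigroup on the Banach lattice C(K, ℝ) of real-valued continuous functions on K with the supremum norm and pointwise order. If the semigroup is not nilpotent (i.e., there is no t ≥ 0 with T_t = 0), then there exists s > 0 such that lim_{n → ∞} ‖(T_s)^n‖^{1/n} > 0, i.e., the operator T_s has non-zero spectral radius; equivalently, the growth bound of the semigroup is not −∞ and the spectrum of the generator is non-empty. -/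
open Filter

/-!
By Baire's theorem the operators `T t` with `t ≥ t₀` are all nonnegative on one common
neighbourhood of some vector `f₀`.  For small `δ > 0` this neighbourhood contains `2 T δ f₀ - f₀`,
so `T t f₀ ≤ 2 T (t + δ) f₀` for `t ≥ t₀`, and hence `T t₀ f₀ ≤ 2 ^ k (T δ) ^ k (T t₀ f₀)` for
all `k`.  As the cone is closed, the right-hand sides cannot approach `0` unless `T t₀ f₀ = 0`;
but then `T t₀`, being nonnegative around a zero, would vanish identically.  So `‖(T δ) ^ k‖`
decays at most like `2 ^ (-k)`; with `δ = s / N` this bounds the spectral radius of `T s` below by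
`2 ^ (-N)`, for any given `s > 0`.
-/

open scoped Topology

/-- A one-parameter semigroup in a monoid, indexed by the half-line `[0, ∞)`; the values at negative
parameters are arbitrary. -/
structure IsOneParameterSemigroup {M : Type*} [Monoid M] (T : ℝ → M) : Prop where
  map_zero : T 0 = 1
  map_add : ∀ s t : ℝ, 0 ≤ s → 0 ≤ t → T (s + t) = T s * T t

/-- A `C₀`-semigroup of operators. Strong continuity is required only at `0`, from the right; on a
Banach space this is equivalent to strong continuity on `[0, ∞)`. -/
structure IsC0Semigroup {E : Type*} [NormedAddCommGroup E] [NormedSpace ℝ E]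
    (T : ℝ → E →L[ℝ] E) : Prop extends IsOneParameterSemigroup T where
  tendsto_zero : ∀ f : E, Tendsto (fun t => T t f) (𝓝[>] 0) (𝓝 f)

/-- Individual eventual positivity of a family of operators: the time from which on the orbit of
`f ≥ 0` is nonnegative may depend on `f`. -/
def IsIndividuallyEventuallyPositive {ι E F : Type*} [Preorder ι]
    [NormedAddCommGroup E] [NormedSpace ℝ E] [LE E]
    [NormedAddCommGroup F] [NormedSpace ℝ F] [LE F] (T : ι → E →L[ℝ] F) : Prop :=
  ∀ f : E, 0 ≤ f → ∀ᶠ t in atTop, 0 ≤ T t f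

theorem IsOneParameterSemigroup.map_natCast_mul {M : Type*} [Monoid M] {T : ℝ → M}
    (hT : IsOneParameterSemigroup T) {t : ℝ} (ht : 0 ≤ t) (n : ℕ) : T (n * t) = T t ^ n := by
  induction n with
  | zero => simpa using hT.map_zero
  | succ n ih =>
    rw [Nat.cast_succ, add_one_mul, hT.map_add _ _ (by positivity) ht, ih, pow_succ]

theorem exists_interior_nonempty_of_isOpen_subset_iUnion {X ι : Type*} [TopologicalSpace X]
    [BaireSpace X] [Countable ι] {U : Set X} {A : ι → Set X} (hU : IsOpen U) (hne : U.Nonempty)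
    (hA : ∀ i, IsClosed (A i)) (hcover : U ⊆ ⋃ i, A i) : ∃ i, (interior (A i)).Nonempty := by
  by_contra! hempty
  have hmeagre : IsMeagre (⋃ i, A i) :=
    isMeagre_iUnion fun i => ((hA i).isNowhereDense_iff.2 (hempty i)).isMeagre
  exact not_isMeagre_of_isOpen hU hne (hmeagre.mono hcover)

theorem IsIndividuallyEventuallyPositive.exists_eventually_nhds_nonneg {ι E F : Type*} [Preorder ι]
    [(atTop : Filter ι).IsCountablyGenerated]
    [NormedAddCommGroup E] [NormedSpace ℝ E] [BaireSpace E] [LE E]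
    [NormedAddCommGroup F] [NormedSpace ℝ F] [Preorder F] [ClosedIciTopology F]
    {T : ι → E →L[ℝ] F} (hT : IsIndividuallyEventuallyPositive T)
    (hcone : (interior {f : E | 0 ≤ f}).Nonempty) :
    ∃ f₀ : E, ∃ s ∈ (atTop : Filter ι), ∀ᶠ f in 𝓝 f₀, ∀ t ∈ s, 0 ≤ T t f := by
  obtain ⟨s, hs⟩ := (atTop : Filter ι).exists_antitone_basis
  have hclosed (n : ℕ) : IsClosed {f : E | ∀ t ∈ s n, 0 ≤ T t f} := by
    simp only [Set.ofPred_forall]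
    exact isClosed_biInter fun t _ => isClosed_Ici.preimage (T t).continuous
  have hcover : interior {f : E | 0 ≤ f} ⊆ ⋃ n, {f : E | ∀ t ∈ s n, 0 ≤ T t f} := fun f hf =>
    Set.mem_iUnion.2 (hs.mem_iff.1 (hT f (interior_subset hf)))
  obtain ⟨n, f₀, hf₀⟩ :=
    exists_interior_nonempty_of_isOpen_subset_iUnion isOpen_interior hcone hclosed hcover
  exact ⟨f₀, s n, hs.mem n, mem_interior_iff_mem_nhds.1 hf₀⟩

theorem eq_zero_of_eventually_nhds_nonneg_of_map_eq_zero {𝕜 E F : Type*}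
    [NontriviallyNormedField 𝕜] [TopologicalSpace E] [AddCommGroup E] [ContinuousAdd E]
    [Module 𝕜 E] [ContinuousSMul 𝕜 E] [AddCommGroup F] [PartialOrder F] [IsOrderedAddMonoid F]
    [Module 𝕜 F] {S : E →ₗ[𝕜] F} {f₀ : E} (hS : ∀ᶠ f in 𝓝 f₀, 0 ≤ S f) (h₀ : S f₀ = 0) :
    S = 0 := by
  ext g
  have hnonneg (v : E) : ∀ᶠ c : 𝕜 in 𝓝[≠] 0, 0 ≤ c • S v := by
    have hlim : Tendsto (fun c : 𝕜 => f₀ + c • v) (𝓝 0) (𝓝 f₀) :=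
      Continuous.tendsto' (by fun_prop) 0 f₀ (by simp)
    filter_upwards [(hlim.mono_left nhdsWithin_le_nhds).eventually hS] with c hc
    simpa only [map_add, h₀, zero_add, map_smul] using hc
  obtain ⟨c, ⟨hpos, hneg⟩, hc⟩ :=
    (((hnonneg g).and (hnonneg (-g))).and eventually_mem_nhdsWithin).exists
  rw [map_neg, smul_neg, neg_nonneg] at hneg
  exact (smul_eq_zero.1 (hneg.antisymm hpos)).resolve_left hc

theorem exists_pos_forall_le_norm_of_not_le_zero {E : Type*} [SeminormedAddCommGroup E] [Preorder E]
    [ClosedIciTopology E] {x : E} (hx : ¬ x ≤ 0) : ∃ c > 0, ∀ y, x ≤ y → c ≤ ‖y‖ := by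
  obtain ⟨c, hc, hball⟩ := Metric.isOpen_iff.1 (isClosed_Ici (a := x)).isOpen_compl 0 hx
  refine ⟨c, hc, fun y hxy => ?_⟩
  by_contra! hy
  exact hball (mem_ball_zero_iff.2 hy) hxy

theorem exists_pos_forall_le_pow_mul_norm_pow {E : Type*} [NormedAddCommGroup E] [NormedSpace ℝ E]
    [Preorder E] [IsOrderedAddMonoid E] [ClosedIciTopology E] {S : E →L[ℝ] E} {x : E} {a : ℕ}
    (hx : ¬ x ≤ 0) (hS : ∀ k : ℕ, (S ^ k) x ≤ a • (S ^ (k + 1)) x) :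
    ∃ c : ℝ, 0 < c ∧ ∀ k : ℕ, c ≤ (a : ℝ) ^ k * ‖S ^ k‖ := by
  have hmono : Monotone fun k : ℕ => a ^ k • (S ^ k) x :=
    monotone_nat_of_le_succ fun k => by
      rw [pow_succ a, mul_nsmul']
      exact nsmul_le_nsmul_right (hS k) _
  obtain ⟨c, hc, hle⟩ := exists_pos_forall_le_norm_of_not_le_zero hx
  have hx_norm : 0 < ‖x‖ := hc.trans_le (hle x le_rfl)
  refine ⟨c / ‖x‖, by positivity, fun k => (div_le_iff₀ hx_norm).2 ?_⟩
  calc c ≤ ‖a ^ k • (S ^ k) x‖ := hle _ (by simpa using hmono k.zero_le)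
    _ = (a : ℝ) ^ k * ‖(S ^ k) x‖ := by rw [RCLike.norm_nsmul ℝ, nsmul_eq_mul, Nat.cast_pow]
    _ ≤ (a : ℝ) ^ k * (‖S ^ k‖ * ‖x‖) := by gcongr; exact (S ^ k).le_opNorm x
    _ = (a : ℝ) ^ k * ‖S ^ k‖ * ‖x‖ := (mul_assoc _ _ _).symm

theorem le_of_tendsto_rpow_one_div {u : ℕ → ℝ} {b c r : ℝ} (hb : 0 ≤ b) (hc : 0 < c)
    (hu : ∀ᶠ n in atTop, c * b ^ n ≤ u n)
    (hr : Tendsto (fun n : ℕ => u n ^ (1 / (n : ℝ))) atTop (𝓝 r)) : b ≤ r := by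
  have hroot : Tendsto (fun n : ℕ => c ^ (1 / (n : ℝ)) * b) atTop (𝓝 b) := by
    simpa using ((Real.continuousAt_const_rpow hc.ne').tendsto.comp
      tendsto_one_div_atTop_nhds_zero_nat).mul_const b
  refine le_of_tendsto_of_tendsto hroot hr ?_
  filter_upwards [hu, eventually_ne_atTop 0] with n hn hn0
  calc c ^ (1 / (n : ℝ)) * b = (c * b ^ n) ^ (1 / (n : ℝ)) := by
        rw [Real.mul_rpow hc.le (by positivity), one_div, Real.pow_rpow_inv_natCast hb hn0]
    _ ≤ u n ^ (1 / (n : ℝ)) := by gcongr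

namespace IsC0Semigroup

variable {E : Type*} [NormedAddCommGroup E] [NormedSpace ℝ E] [PartialOrder E]
  [IsOrderedAddMonoid E] {T : ℝ → E →L[ℝ] E} {f₀ : E} {t₀ : ℝ}

theorem eventually_le_two_nsmul (hT : IsC0Semigroup T) (ht₀ : 0 ≤ t₀)
    (hpos : ∀ᶠ f in 𝓝 f₀, ∀ t ≥ t₀, 0 ≤ T t f) :
    ∀ᶠ δ in 𝓝[>] 0, ∀ t ≥ t₀, T t f₀ ≤ 2 • T (t + δ) f₀ := by
  have hlim : Tendsto (fun δ => 2 • T δ f₀ - f₀) (𝓝[>] 0) (𝓝 f₀) := by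
    simpa only [two_nsmul, add_sub_cancel_right] using
      ((hT.tendsto_zero f₀).const_smul (2 : ℕ)).sub_const f₀
  filter_upwards [hlim.eventually hpos, eventually_mem_nhdsWithin] with δ hδ_nonneg hδ t ht
  rw [hT.map_add t δ (ht₀.trans ht) (Set.mem_Ioi.1 hδ).le, mul_apply_eq_comp]
  simpa only [map_sub, map_nsmul, sub_nonneg] using hδ_nonneg t ht

theorem exists_pos_forall_mul_pow_le_norm_pow [ClosedIciTopology E] (hT : IsC0Semigroup T)
    (ht₀ : 0 ≤ t₀) (hpos : ∀ᶠ f in 𝓝 f₀, ∀ t ≥ t₀, 0 ≤ T t f) (hne : T t₀ f₀ ≠ 0) {s : ℝ}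
    (hs : 0 < s) : ∃ b c : ℝ, 0 < b ∧ 0 < c ∧ ∀ n : ℕ, c * b ^ n ≤ ‖T s ^ n‖ := by
  have hdiv : Tendsto (fun N : ℕ => s / N) atTop (𝓝[>] 0) :=
    tendsto_nhdsWithin_iff.2 ⟨tendsto_const_div_atTop_nhds_zero_nat s,
      (eventually_gt_atTop 0).mono fun N hN => div_pos hs (Nat.cast_pos.2 hN)⟩
  obtain ⟨N, hstep, hN⟩ := ((hdiv.eventually (hT.eventually_le_two_nsmul ht₀ hpos)).and
    (eventually_ne_atTop 0)).exists
  set δ := s / N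
  have hδ : 0 ≤ δ := by positivity
  have hTs : T s = T δ ^ N := by
    rw [← hT.map_natCast_mul hδ, mul_div_cancel₀ s (Nat.cast_ne_zero.2 hN)]
  have horbit (k : ℕ) : (T δ ^ k) (T t₀ f₀) = T (t₀ + k * δ) f₀ := by
    rw [add_comm, hT.map_add _ _ (by positivity) ht₀, hT.map_natCast_mul hδ,
      mul_apply_eq_comp]
  have hx : ¬ T t₀ f₀ ≤ 0 := fun h => hne (h.antisymm (hpos.self_of_nhds t₀ le_rfl))
  obtain ⟨c, hc, hlower⟩ := exists_pos_forall_le_pow_mul_norm_pow (S := T δ) (a := 2) hx fun k => by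
    rw [horbit, horbit, Nat.cast_succ, add_one_mul, ← add_assoc]
    exact hstep _ (le_add_of_nonneg_right (by positivity))
  refine ⟨(2 ^ N)⁻¹, c, by positivity, hc, fun n => ?_⟩
  rw [inv_pow, mul_inv_le_iff₀ (by positivity), ← pow_mul, hTs, ← pow_mul, mul_comm]
  exact_mod_cast hlower (N * n)

end IsC0Semigroup

theorem nonnilpotent_eventually_positive_semigroup_on_CK_has_positive_spectral_radius_general
    {E : Type*} [NormedAddCommGroup E] [NormedSpace ℝ E] [BaireSpace E] [PartialOrder E]
    [IsOrderedAddMonoid E] [ClosedIciTopology E] (hcone : (interior {f : E | 0 ≤ f}).Nonempty)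
    {T : ℝ → E →L[ℝ] E} (hT : IsC0Semigroup T) (hep : IsIndividuallyEventuallyPositive T)
    (hnil : ¬ ∃ t : ℝ, 0 ≤ t ∧ T t = 0) {s : ℝ} (hs : 0 < s) {r : ℝ}
    (hr : Tendsto (fun n : ℕ => ‖T s ^ n‖ ^ (1 / (n : ℝ))) atTop (𝓝 r)) : 0 < r := by
  obtain ⟨f₀, A, hA, hposA⟩ := hep.exists_eventually_nhds_nonneg hcone
  obtain ⟨t₀, ht₀, hsub⟩ := (atTop_basis' (0 : ℝ)).mem_iff.1 hA
  have hpos : ∀ᶠ f in 𝓝 f₀, ∀ t ≥ t₀, 0 ≤ T t f := hposA.mono fun f hf t ht => hf t (hsub ht)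
  have hne : T t₀ f₀ ≠ 0 := fun h₀ => hnil ⟨t₀, ht₀, ContinuousLinearMap.coe_injective <|
    eq_zero_of_eventually_nhds_nonneg_of_map_eq_zero (hpos.mono fun f hf => hf t₀ le_rfl) h₀⟩
  obtain ⟨b, c, hb, hc, hlower⟩ := hT.exists_pos_forall_mul_pow_le_norm_pow ht₀ hpos hne hs
  exact hb.trans_le (le_of_tendsto_rpow_one_div hb.le hc (.of_forall hlower) hr)

instance {X Y : Type*} [TopologicalSpace X] [TopologicalSpace Y]
    [PartialOrder Y] [OrderClosedTopology Y] : OrderClosedTopology C(X, Y) where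
  isClosed_le' :=
    (OrderClosedTopology.isClosed_le' (α := X → Y)).preimage
      (continuous_coeFun.prodMap continuous_coeFun)

theorem one_mem_interior_setOf_nonneg_continuousMap {K : Type*} [TopologicalSpace K]
    [CompactSpace K] : (1 : C(K, ℝ)) ∈ interior {f : C(K, ℝ) | 0 ≤ f} := by
  refine mem_interior.2 ⟨Metric.ball 1 1, fun f hf x => ?_, Metric.isOpen_ball,
    Metric.mem_ball_self one_pos⟩
  have hdist : |f x - 1| < 1 := (ContinuousMap.dist_apply_le_dist x).trans_lt hf
  simpa using (abs_lt.1 hdist).1.le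

/-- Let `K` be a non-empty compact Hausdorff space and `(T t)_{t ≥ 0}` an individually
eventually positive `C₀`-semigroup on `C(K, ℝ)`.  If the semigroup is not nilpotent,
then there exists `s > 0` such that the operator `T s` has non-zero spectral radius,
i.e. the Gelfand limit `lim ‖(T s)^n‖^{1/n}` (which exists and equals the spectral
radius) is strictly positive. -/
theorem nonnilpotent_eventually_positive_semigroup_on_CK_has_positive_spectral_radius
    {K : Type*} [TopologicalSpace K] [CompactSpace K] [T2Space K] [Nonempty K]
    (T : ℝ → C(K, ℝ) →L[ℝ] C(K, ℝ))
    (hT0 : T 0 = 1)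
    (hTadd : ∀ s t : ℝ, 0 ≤ s → 0 ≤ t → T (s + t) = (T s).comp (T t))
    (hTcont : ∀ f : C(K, ℝ), ContinuousOn (fun t : ℝ => T t f) (Set.Ici 0))
    (hep : ∀ f : C(K, ℝ), 0 ≤ f → ∃ t₀ : ℝ, 0 ≤ t₀ ∧ ∀ t : ℝ, t₀ ≤ t → 0 ≤ T t f)
    (hnil : ¬ ∃ t : ℝ, 0 ≤ t ∧ T t = 0) :
    ∃ s : ℝ, 0 < s ∧ ∀ r : ℝ,
      Tendsto (fun n : ℕ => ‖(T s) ^ n‖ ^ (1 / (n : ℝ))) atTop (nhds r) → 0 < r := by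
  have hT : IsC0Semigroup T :=
    { map_zero := hT0
      map_add := hTadd
      tendsto_zero := fun f => by
        have hcont : Tendsto (fun t => T t f) (𝓝[≥] 0) (𝓝 (T 0 f)) := hTcont f 0 Set.self_mem_Ici
        simpa [hT0] using hcont.mono_left (nhdsWithin_mono 0 Set.Ioi_subset_Ici_self) }
  have hpos : IsIndividuallyEventuallyPositive T := fun f hf =>
    let ⟨t₀, _, ht₀⟩ := hep f hf
    eventually_atTop.2 ⟨t₀, ht₀⟩
  exact ⟨1, one_pos, fun _ hr =>
    nonnilpotent_eventually_positive_semigroup_on_CK_has_positive_spectral_radius_general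
      ⟨1, one_mem_interior_setOf_nonneg_continuousMap⟩ hT hpos hnil one_pos hr⟩
end

section
/- Let L be a non-empty locally compact Hausdorff space and let (T_t)_{t ≥ 0} be a C₀-semigroup on the Banach lattice C₀(L, ℝ) of real-valued continuous functions on L vanishing at infinity, with the supremum norm and pointwise order, which is individually eventually positive and persistently irreducible. Then there exists s > 0 such that lim_{n → ∞} ‖(T_s)^n‖^{1/n} > 0, i.e., the operator T_s has non-zero spectral radius; equivalently, the growth bound of the semigroup is not −∞ and the spectrum of the generator is non-empty. -/
open Filter
open scoped ZeroAtInfty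

/-!
Suppose `T s` has spectral radius zero, so that every orbit decays faster than every exponential.
Fix `f ≥ 0`, non-zero and supported in a compact set `K`. Persistent irreducibility, applied to
ideals of functions vanishing on a set, shows that `T t f ≠ 0` for all `t ≥ 0` and that every point
of `K` is seen by the orbit: `T t f x ≠ 0` for arbitrarily large `t`. To know that these ideals are
invariant for all large `t`, the waiting times in individual eventual positivity have to be made
uniform over the ideal; this is done by applying Baire's theorem to the multiples `h * u` of a
single function `u`, which are dense in the ideal of functions vanishing on the zero set of `u`.
By compactness of `K`, finitely many `a > 0` satisfy `c f ≤ ∑ T a f` for some `c > 0`, hence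
`c ‖T t f‖ ≤ ∑ ‖T (a + t) f‖` for large `t`. After multiplication by `exp (r t)` with `r` large, the
right-hand side is smaller than the left-hand side at an almost maximal point, so a function that
decays superexponentially can satisfy this inequality only if it vanishes eventually.
-/

open Asymptotics Set
open scoped Topology

section Growth

lemma isBigO_pow_of_tendsto_norm_rpow_one_div {E : Type*} [SeminormedAddCommGroup E] {u : ℕ → E}
    {ρ ε : ℝ} (hρ : Tendsto (fun n : ℕ => ‖u n‖ ^ (1 / (n : ℝ))) atTop (𝓝 ρ)) (hε : ρ < ε) :
    u =O[atTop] fun n => ε ^ n := by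
  refine .of_bound' ?_
  filter_upwards [hρ.eventually_lt_const hε, eventually_ne_atTop 0] with n hn hn0
  calc ‖u n‖ = (‖u n‖ ^ (1 / (n : ℝ))) ^ n := by
        rw [one_div, Real.rpow_inv_natCast_pow (norm_nonneg _) hn0]
    _ ≤ ε ^ n := by gcongr
    _ ≤ ‖ε ^ n‖ := le_abs_self _

lemma nonpos_of_mul_le_sum_mul_translates {φ w : ℝ → ℝ} {F : Finset ℝ} {c t₀ : ℝ}
    (hF : ∀ a ∈ F, 0 ≤ a) (hw : ∀ a ∈ F, 0 ≤ w a) (hwc : ∑ a ∈ F, w a < c)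
    (hbdd : BddAbove (φ '' Ici t₀)) (hφ : ∀ t, t₀ ≤ t → c * φ t ≤ ∑ a ∈ F, w a * φ (a + t))
    {t : ℝ} (ht : t₀ ≤ t) : φ t ≤ 0 := by
  set β := sSup (φ '' Ici t₀)
  have le_β : ∀ t, t₀ ≤ t → φ t ≤ β := fun t ht => le_csSup hbdd (mem_image_of_mem φ ht)
  have hc : 0 < c := (Finset.sum_nonneg hw).trans_lt hwc
  have hcβ : c * β ≤ (∑ a ∈ F, w a) * β := by
    rw [← le_div_iff₀' hc]
    refine csSup_le (nonempty_Ici.image φ) (forall_mem_image.2 fun t ht => ?_)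
    rw [le_div_iff₀' hc]
    calc c * φ t ≤ ∑ a ∈ F, w a * φ (a + t) := hφ t ht
      _ ≤ ∑ a ∈ F, w a * β := by
          gcongr with a ha
          · exact hw a ha
          · exact le_β _ (le_add_of_nonneg_of_le (hF a ha) ht)
      _ = (∑ a ∈ F, w a) * β := (Finset.sum_mul ..).symm
  have hβ : β ≤ 0 := le_of_not_gt fun hβ => (mul_lt_mul_of_pos_right hwc hβ).not_ge hcβ
  exact (le_β t ht).trans hβ

lemma eventually_nonpos_of_mul_le_sum_translates {b : ℝ → ℝ} {F : Finset ℝ} {c : ℝ} (hc : 0 < c)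
    (hF : ∀ a ∈ F, 0 < a) (hb : ∀ᶠ t in atTop, c * b t ≤ ∑ a ∈ F, b (a + t))
    (hdecay : ∀ ω : ℝ, b =O[atTop] fun t => Real.exp (ω * t)) :
    ∀ᶠ t in atTop, b t ≤ 0 := by
  obtain ⟨r, hr⟩ : ∃ r : ℝ, ∑ a ∈ F, Real.exp (-(r * a)) < c := by
    have hlim : Tendsto (fun r : ℝ => ∑ a ∈ F, Real.exp (-(r * a))) atTop (𝓝 (∑ _ ∈ F, 0)) :=
      tendsto_finsetSum F fun a ha =>
        Real.tendsto_exp_neg_atTop_nhds_zero.comp (tendsto_id.atTop_mul_const (hF a ha))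
    exact (hlim.eventually_lt_const (by simpa using hc)).exists
  obtain ⟨C, hC⟩ := (hdecay (-r)).bound
  obtain ⟨t₀, ht₀⟩ := eventually_atTop.1 (hb.and hC)
  let φ : ℝ → ℝ := fun t => Real.exp (r * t) * b t
  have hbdd : BddAbove (φ '' Ici t₀) := by
    refine ⟨C, forall_mem_image.2 fun t ht => ?_⟩
    calc φ t ≤ Real.exp (r * t) * (C * ‖Real.exp (-r * t)‖) :=
          mul_le_mul_of_nonneg_left ((le_abs_self _).trans (ht₀ t ht).2) (Real.exp_pos _).le
      _ = C := by
          rw [Real.norm_of_nonneg (Real.exp_pos _).le, mul_left_comm, ← Real.exp_add]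
          simp
  have hφ : ∀ t, t₀ ≤ t → c * φ t ≤ ∑ a ∈ F, Real.exp (-(r * a)) * φ (a + t) := fun t ht => by
    calc c * φ t = Real.exp (r * t) * (c * b t) := by ring
      _ ≤ Real.exp (r * t) * ∑ a ∈ F, b (a + t) := by gcongr; exact (ht₀ t ht).1
      _ = ∑ a ∈ F, Real.exp (-(r * a)) * φ (a + t) := by
          rw [Finset.mul_sum]
          refine Finset.sum_congr rfl fun a _ => ?_
          rw [← mul_assoc, ← Real.exp_add]
          ring_nf
  filter_upwards [eventually_ge_atTop t₀] with t ht
  have hφt : φ t ≤ 0 := nonpos_of_mul_le_sum_mul_translates (fun a ha => (hF a ha).le)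
    (fun _ _ => (Real.exp_pos _).le) hr hbdd hφ ht
  exact nonpos_of_mul_nonpos_right hφt (Real.exp_pos _)

end Growth

section Baire

variable {𝕜 E F ι : Type*} [NontriviallyNormedField 𝕜] [SeminormedAddCommGroup E]
  [NormedSpace 𝕜 E] [SeminormedAddCommGroup F] [NormedSpace 𝕜 F]

lemma eventually_forall_apply_mem_of_forall_eventually_apply_mem [CompleteSpace E] {l : Filter ι}
    [l.IsCountablyGenerated] {S : ι → E →L[𝕜] F} {M : Submodule 𝕜 F} (hM : IsClosed (M : Set F))
    (h : ∀ f, ∀ᶠ i in l, S i f ∈ M) : ∀ᶠ i in l, ∀ f, S i f ∈ M := by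
  obtain ⟨U, hU⟩ := l.exists_antitone_basis
  let A : ℕ → Submodule 𝕜 E := fun n => ⨅ i ∈ U n, M.comap (S i : E →ₗ[𝕜] F)
  have mem_A : ∀ {n f}, f ∈ A n ↔ ∀ i ∈ U n, S i f ∈ M := by simp [A]
  have isClosed_A : ∀ n, IsClosed (A n : Set E) := fun n => by
    simp only [A, Submodule.coe_iInf, Submodule.comap_coe]
    exact isClosed_biInter fun i _ => hM.preimage (S i).continuous
  have iUnion_A : ⋃ n, (A n : Set E) = univ := eq_univ_of_forall fun f => by
    obtain ⟨n, hn⟩ := hU.mem_iff.1 (h f)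
    exact mem_iUnion.2 ⟨n, mem_A.2 fun i hi => hn hi⟩
  obtain ⟨n, hn⟩ := nonempty_interior_of_iUnion_of_closed isClosed_A iUnion_A
  have hAn : A n = ⊤ := (A n).eq_top_of_nonempty_interior' hn
  filter_upwards [hU.mem n] with i hi f
  exact mem_A.1 (hAn ▸ Submodule.mem_top) i hi

end Baire

section Compact

variable {X ι : Type*} [TopologicalSpace X]

lemma exists_mul_le_finsetSum_of_isCompact {K : Set X} (hK : IsCompact K) {f : X → ℝ}
    (hf : ContinuousOn f K) (hfK : ∀ x ∉ K, f x ≤ 0) {S : Set ι} {v : ι → X → ℝ}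
    (hv : ∀ i ∈ S, Continuous (v i)) (hv_nonneg : ∀ i ∈ S, ∀ x, 0 ≤ v i x)
    (hcover : ∀ x ∈ K, ∃ i ∈ S, v i x ≠ 0) :
    ∃ F : Finset ι, ↑F ⊆ S ∧ ∃ c : ℝ, 0 < c ∧ ∀ x, c * f x ≤ ∑ i ∈ F, v i x := by
  obtain ⟨F, hFS, hF, hKF⟩ := hK.elim_finite_subcover_image (c := fun i => {x | v i x ≠ 0})
    (fun i hi => isOpen_ne_fun (hv i hi) continuous_const) fun x hx => by simpa using hcover x hx
  lift F to Finset ι using hF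
  have sum_pos : ∀ x ∈ K, 0 < ∑ i ∈ F, v i x := fun x hx => by
    obtain ⟨i, hi, hix⟩ := mem_iUnion₂.1 (hKF hx)
    exact Finset.sum_pos' (fun j hj => hv_nonneg j (hFS hj) x)
      ⟨i, hi, (hv_nonneg i (hFS hi) x).lt_of_ne' hix⟩
  obtain ⟨m, hm, hmK⟩ := hK.exists_forall_le'
    (continuous_finsetSum F fun i hi => hv i (hFS hi)).continuousOn sum_pos
  obtain ⟨C, hC⟩ := hK.exists_bound_of_continuousOn hf
  refine ⟨F, hFS, m / (|C| + 1), by positivity, fun x => ?_⟩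
  by_cases hx : x ∈ K
  · calc m / (|C| + 1) * f x ≤ m / (|C| + 1) * (|C| + 1) := by
          gcongr
          linarith [le_abs_self (f x), hC x hx, le_abs_self C, Real.norm_eq_abs (f x)]
      _ = m := by field_simp
      _ ≤ ∑ i ∈ F, v i x := hmK x hx
  · calc m / (|C| + 1) * f x ≤ 0 := mul_nonpos_of_nonneg_of_nonpos (by positivity) (hfK x hx)
      _ ≤ ∑ i ∈ F, v i x := Finset.sum_nonneg fun i hi => hv_nonneg i (hFS hi) x

end Compact

section Series

lemma exists_pos_summable_smul {ι E : Type*} [Countable ι] [NormedAddCommGroup E]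
    [NormedSpace ℝ E] [CompleteSpace E] (v : ι → E) :
    ∃ ε : ι → ℝ, (∀ i, 0 < ε i) ∧ Summable fun i => ε i • v i := by
  obtain ⟨δ, hδ, c, hδc, -⟩ := NNReal.exists_pos_sum_of_countable one_ne_zero ι
  refine ⟨fun i => δ i / (1 + ‖v i‖), fun i => by have := hδ i; positivity,
    .of_norm_bounded (NNReal.summable_coe.2 hδc.summable) fun i => ?_⟩
  rw [norm_smul, Real.norm_of_nonneg (by positivity), div_mul_eq_mul_div,
    div_le_iff₀ (by positivity)]
  gcongr
  linarith

end Series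

section ZeroAtInfty

variable {L : Type*} [TopologicalSpace L]

lemma norm_apply_le_norm_zeroAtInfty {E : Type*} [SeminormedAddCommGroup E] (f : C₀(L, E)) (x : L) :
    ‖f x‖ ≤ ‖f‖ := by
  simpa using f.toBCF.norm_coe_le_norm x

lemma norm_zeroAtInfty_le {E : Type*} [SeminormedAddCommGroup E] {f : C₀(L, E)} {C : ℝ}
    (hC : 0 ≤ C) (h : ∀ x, ‖f x‖ ≤ C) : ‖f‖ ≤ C := by
  rw [← ZeroAtInftyContinuousMap.norm_toBCF_eq_norm]
  exact (BoundedContinuousFunction.norm_le hC).2 h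

lemma isCompact_setOf_le_norm_zeroAtInfty {E : Type*} [SeminormedAddCommGroup E] (f : C₀(L, E))
    {ε : ℝ} (hε : 0 < ε) : IsCompact {x | ε ≤ ‖f x‖} := by
  have hlim : ∀ᶠ x in cocompact L, ‖f x‖ < ε :=
    (tendsto_zero_iff_norm_tendsto_zero.1 (zero_at_infty f)).eventually_lt_const hε
  obtain ⟨K, hK, hKε⟩ := mem_cocompact.1 hlim
  refine hK.of_isClosed_subset (isClosed_le continuous_const (map_continuous f).norm)
    fun x (hx : ε ≤ ‖f x‖) => ?_
  by_contra hxK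
  exact (hKε hxK).not_ge hx

/-- Postcomposition of a function vanishing at infinity with a continuous function fixing `0`. -/
def zeroAtInftyPostcomp {E F : Type*} [TopologicalSpace E] [Zero E] [TopologicalSpace F] [Zero F]
    (φ : C(E, F)) (hφ : φ 0 = 0) (f : C₀(L, E)) : C₀(L, F) where
  toContinuousMap := φ.comp f
  zero_at_infty' := (φ.continuous.tendsto' 0 0 hφ).comp (zero_at_infty f)

/-- Evaluation at `x`, as a continuous linear functional on `C₀(L, ℝ)`. -/
noncomputable def zeroAtInftyEvalCLM (x : L) : C₀(L, ℝ) →L[ℝ] ℝ :=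
  LinearMap.mkContinuous
    { toFun := fun f => f x
      map_add' := fun _ _ => rfl
      map_smul' := fun _ _ => rfl } 1
    fun f => by simpa using norm_apply_le_norm_zeroAtInfty f x

@[simp]
lemma zeroAtInftyEvalCLM_apply (x : L) (f : C₀(L, ℝ)) : zeroAtInftyEvalCLM x f = f x := rfl

/-- The functions in `C₀(L, ℝ)` vanishing on `Z`. -/
noncomputable def vanishingIdeal (Z : Set L) : Submodule ℝ C₀(L, ℝ) :=
  ⨅ x ∈ Z, (zeroAtInftyEvalCLM x).ker

lemma mem_vanishingIdeal {Z : Set L} {f : C₀(L, ℝ)} :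
    f ∈ vanishingIdeal Z ↔ ∀ x ∈ Z, f x = 0 := by
  simp [vanishingIdeal]

lemma isClosed_vanishingIdeal (Z : Set L) : IsClosed (vanishingIdeal Z : Set C₀(L, ℝ)) := by
  simp only [vanishingIdeal, Submodule.coe_iInf]
  exact isClosed_biInter fun x _ => (zeroAtInftyEvalCLM x).isClosed_ker

lemma finiteDimensional_of_vanishingIdeal_singleton_eq_bot {x : L}
    (hx : vanishingIdeal {x} = (⊥ : Submodule ℝ C₀(L, ℝ))) : FiniteDimensional ℝ C₀(L, ℝ) :=
  Module.Finite.of_injective (zeroAtInftyEvalCLM x).toLinearMap <|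
    LinearMap.ker_eq_bot.1 <| by simpa [vanishingIdeal] using hx

lemma mem_closure_range_mul_of_vanishes {u g : C₀(L, ℝ)} (hg : ∀ x, u x = 0 → g x = 0) :
    g ∈ closure (range fun h : C₀(L, ℝ) => h * u) := by
  rw [Metric.mem_closure_range_iff]
  intro ε hε
  obtain ⟨m, hm, hmu⟩ := (isCompact_setOf_le_norm_zeroAtInfty g (half_pos hε)).exists_forall_le'
    (f := fun x => u x ^ 2) ((map_continuous u).pow 2).continuousOn (a := 0) fun x hx => by
      have hgx : g x ≠ 0 := norm_pos_iff.1 ((half_pos hε).trans_le hx)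
      have hux : u x ≠ 0 := mt (hg x) hgx
      positivity
  set δ := m * (ε / 2) / (‖g‖ + 1) with hδ
  have hδ_pos : 0 < δ := by positivity
  let φ : C(ℝ, ℝ) := ⟨fun y => y / (y ^ 2 + δ),
    continuous_id.div (by fun_prop) fun y => by positivity⟩
  refine ⟨g * zeroAtInftyPostcomp φ (by simp [φ]) u, ?_⟩
  have happly : ∀ x, (g - g * zeroAtInftyPostcomp φ (by simp [φ]) u * u) x =
      g x * (δ / (u x ^ 2 + δ)) := fun x => by
    change g x - g x * (u x / (u x ^ 2 + δ)) * u x = _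
    field_simp
    ring
  rw [dist_eq_norm]
  refine (norm_zeroAtInfty_le (half_pos hε).le fun x => ?_).trans_lt (half_lt_self hε)
  rw [happly, norm_mul, Real.norm_of_nonneg (show 0 ≤ δ / (u x ^ 2 + δ) by positivity)]
  rcases le_total ‖g x‖ (ε / 2) with hsmall | hlarge
  · calc ‖g x‖ * (δ / (u x ^ 2 + δ)) ≤ ε / 2 * 1 := by
          gcongr
          exact div_le_one_of_le₀ (by linarith [sq_nonneg (u x)]) (by positivity)
      _ = ε / 2 := mul_one _
  · calc ‖g x‖ * (δ / (u x ^ 2 + δ)) ≤ (‖g‖ + 1) * (δ / m) := by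
          gcongr
          · linarith [norm_apply_le_norm_zeroAtInfty g x]
          · linarith [hmu x hlarge]
      _ = ε / 2 := by rw [hδ]; field_simp

lemma exists_mem_closure_span_zeros_eq_of_countable {ι : Type*} [Countable ι] {v : ι → C₀(L, ℝ)}
    (hv : ∀ i x, 0 ≤ v i x) :
    ∃ u ∈ (Submodule.span ℝ (range v)).topologicalClosure, (∀ x, 0 ≤ u x) ∧
      ∀ x, u x = 0 ↔ ∀ i, v i x = 0 := by
  obtain ⟨ε, hε, hsum⟩ := exists_pos_summable_smul v
  have happly : ∀ x, HasSum (fun i => ε i * v i x) ((∑' i, ε i • v i) x) := fun x => by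
    simpa using (zeroAtInftyEvalCLM x).hasSum hsum.hasSum
  have hnonneg : ∀ x i, 0 ≤ ε i * v i x := fun x i => mul_nonneg (hε i).le (hv i x)
  refine ⟨∑' i, ε i • v i, ?_, fun x => (happly x).nonneg (hnonneg x), fun x => ?_⟩
  · refine (Submodule.isClosed_topologicalClosure _).mem_of_tendsto hsum.hasSum
      (.of_forall fun s => Submodule.sum_mem _ fun i _ => ?_)
    exact Submodule.le_topologicalClosure _
      (Submodule.smul_mem _ _ (Submodule.subset_span (mem_range_self i)))
  · have hzero : HasSum (fun i => ε i * v i x) 0 ↔ (fun i => ε i * v i x) = 0 :=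
      hasSum_zero_iff_of_nonneg (hnonneg x)
    calc (∑' i, ε i • v i) x = 0 ↔ HasSum (fun i => ε i * v i x) 0 :=
          ⟨fun h => h ▸ happly x, fun h => (happly x).unique h⟩
      _ ↔ ∀ i, v i x = 0 := by simp [hzero, funext_iff, (hε _).ne']

lemma exists_mem_closure_span_zeros_eq {X : Type*} [TopologicalSpace X]
    [TopologicalSpace.SeparableSpace X] {v : X → C₀(L, ℝ)} (hv : Continuous v)
    (hv_nonneg : ∀ t x, 0 ≤ v t x) :
    ∃ u ∈ (Submodule.span ℝ (range v)).topologicalClosure, (∀ x, 0 ≤ u x) ∧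
      ∀ x, u x = 0 ↔ ∀ t, v t x = 0 := by
  obtain ⟨D, hD_countable, hD_dense⟩ := TopologicalSpace.exists_countable_dense X
  have := hD_countable.to_subtype
  obtain ⟨u, hu, hu_nonneg, hu_zero⟩ :=
    exists_mem_closure_span_zeros_eq_of_countable (v := fun t : D => v t) fun t => hv_nonneg t
  refine ⟨u, Submodule.topologicalClosure_mono (Submodule.span_mono ?_) hu, hu_nonneg,
    fun x => (hu_zero x).trans ⟨fun hx => ?_, fun hx t => hx t⟩⟩
  · exact range_subset_iff.2 fun t => mem_range_self (t : X)
  · exact congrFun <| ((zeroAtInftyEvalCLM x).continuous.comp hv).ext_on hD_dense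
      continuous_const fun t ht => hx ⟨t, ht⟩

lemma exists_nonneg_ne_zero_eq_zero_off_isCompact [Nontrivial C₀(L, ℝ)] :
    ∃ f g : C₀(L, ℝ), ∃ K, (∀ x, 0 ≤ f x) ∧ f ≠ 0 ∧ IsCompact K ∧ (∀ x ∉ K, f x = 0) ∧
      ∀ x ∈ K, g x ≠ 0 := by
  obtain ⟨g, hg⟩ := exists_ne (0 : C₀(L, ℝ))
  obtain ⟨x₀, hx₀⟩ := DFunLike.ne_iff.1 hg
  have hε : 0 < ‖g x₀‖ / 2 := half_pos (norm_pos_iff.2 hx₀)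
  set ε := ‖g x₀‖ / 2 with hε_def
  let φ : C(ℝ, ℝ) := ⟨fun y => max (‖y‖ - ε) 0, by fun_prop⟩
  refine ⟨zeroAtInftyPostcomp φ (by simp [φ, hε.le]) g, g, {x | ε ≤ ‖g x‖},
    fun x => le_max_right _ _, DFunLike.ne_iff.2 ⟨x₀, ?_⟩,
    isCompact_setOf_le_norm_zeroAtInfty g hε, fun x hx => ?_, fun x hx => ?_⟩
  · exact (lt_max_of_lt_left (by rw [hε_def]; linarith) : 0 < max (‖g x₀‖ - ε) 0).ne'
  · exact max_eq_right (sub_nonpos.2 (lt_of_not_ge hx).le)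
  · exact norm_pos_iff.1 (hε.trans_le hx)

lemma nontrivial_zeroAtInfty [RegularSpace L] [LocallyCompactSpace L] [Nonempty L] :
    Nontrivial C₀(L, ℝ) := by
  obtain ⟨x⟩ := ‹Nonempty L›
  obtain ⟨f, hf, -, hf_supp, -⟩ := exists_continuous_one_zero_of_isCompact
    (isCompact_singleton (x := x)) isClosed_empty (disjoint_empty _)
  exact nontrivial_of_ne (⟨f, hf_supp.is_zero_at_infty⟩ : C₀(L, ℝ)) 0
    (DFunLike.ne_iff.2 ⟨x, (hf rfl).trans_ne one_ne_zero⟩)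

end ZeroAtInfty

/-- `(T t)_{t ≥ 0}` is a `C₀`-semigroup. The values of `T` at negative times are irrelevant. -/
structure IsC0Semigroup_s18 {𝕜 E : Type*} [NontriviallyNormedField 𝕜] [NormedAddCommGroup E]
    [NormedSpace 𝕜 E] (T : ℝ → E →L[𝕜] E) : Prop where
  map_zero : T 0 = 1
  map_add : ∀ s t : ℝ, 0 ≤ s → 0 ≤ t → T (s + t) = (T s).comp (T t)
  continuousOn : ∀ f : E, ContinuousOn (fun t => T t f) (Ici 0)

namespace IsC0Semigroup_s18

variable {𝕜 E : Type*} [NontriviallyNormedField 𝕜] [NormedAddCommGroup E] [NormedSpace 𝕜 E]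
  {T : ℝ → E →L[𝕜] E} {s t : ℝ}

lemma map_add_apply (hT : IsC0Semigroup_s18 T) (hs : 0 ≤ s) (ht : 0 ≤ t) (f : E) :
    T (s + t) f = T s (T t f) := by
  rw [hT.map_add s t hs ht, ContinuousLinearMap.comp_apply]

lemma map_natCast_mul (hT : IsC0Semigroup_s18 T) (hs : 0 ≤ s) (n : ℕ) : T (n * s) = T s ^ n := by
  induction n with
  | zero => simp [hT.map_zero]
  | succ n ih =>
    rw [Nat.cast_succ, add_one_mul, hT.map_add _ _ (by positivity) hs, ih, pow_succ]
    rfl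

lemma isUnit [CompleteSpace 𝕜] [FiniteDimensional 𝕜 E] (hT : IsC0Semigroup_s18 T) (ht : 0 ≤ t) :
    IsUnit (T t) := by
  have : CompleteSpace E := FiniteDimensional.complete 𝕜 E
  have hT_cont : ContinuousWithinAt T (Ici 0) 0 :=
    continuousOn_clm_apply.2 hT.continuousOn 0 self_mem_Ici
  have isUnit_near_zero : ∀ᶠ s in 𝓝[≥] (0 : ℝ), IsUnit (T s) :=
    hT_cont (Units.isOpen.mem_nhds (hT.map_zero ▸ isUnit_one))
  have hlim : Tendsto (fun n : ℕ => t / (n + 1)) atTop (𝓝[≥] 0) :=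
    tendsto_nhdsWithin_iff.2 ⟨tendsto_const_div_atTop_nhds_zero_nat t |>.comp
      (tendsto_add_atTop_nat 1) |>.congr fun n => by simp,
      .of_forall fun n => mem_Ici.2 (by positivity)⟩
  obtain ⟨n, hn⟩ := (hlim.eventually isUnit_near_zero).exists
  have hpow : T t = T (t / (n + 1)) ^ (n + 1) := by
    rw [← hT.map_natCast_mul (by positivity), Nat.cast_succ, mul_div_cancel₀ _ (by positivity)]
  exact hpow ▸ hn.pow (n + 1)

lemma isBigO_exp (hT : IsC0Semigroup_s18 T) (hs : 0 < s) {ρ ω : ℝ}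
    (hρ : Tendsto (fun n : ℕ => ‖T s ^ n‖ ^ (1 / (n : ℝ))) atTop (𝓝 ρ))
    (hω : ρ < Real.exp (ω * s)) (f : E) :
    (fun t => T t f) =O[atTop] fun t => Real.exp (ω * t) := by
  obtain ⟨B, hB, hpow⟩ :=
    bound_of_isBigO_nat_atTop (isBigO_pow_of_tendsto_norm_rpow_one_div hρ hω)
  obtain ⟨M, hM⟩ : ∃ M, ∀ v ∈ Icc 0 s, ‖Real.exp (-(ω * v)) * ‖T v f‖‖ ≤ M :=
    isCompact_Icc.exists_bound_of_continuousOn <| ContinuousOn.mul (by fun_prop)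
      ((hT.continuousOn f).mono Icc_subset_Ici_self).norm
  refine .of_bound (B * M) ?_
  filter_upwards [eventually_ge_atTop 0] with t ht
  set n := ⌊t / s⌋₊
  set v := t - n * s with hv
  have hv0 : 0 ≤ v := sub_nonneg.2 ((le_div_iff₀ hs).1 (Nat.floor_le (by positivity)))
  have hvs : v ≤ s := by
    have := (div_lt_iff₀ hs).1 (Nat.lt_floor_add_one (t / s))
    linarith
  have hTv : ‖T v f‖ ≤ M * Real.exp (ω * v) := by
    have := (le_abs_self _).trans (hM v ⟨hv0, hvs⟩)
    rwa [Real.exp_neg, inv_mul_le_iff₀' (Real.exp_pos _)] at this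
  calc ‖T t f‖ = ‖(T s ^ n) (T v f)‖ := by
        rw [← hT.map_natCast_mul hs.le, ← hT.map_add_apply (by positivity) hv0, hv,
          add_sub_cancel]
    _ ≤ ‖T s ^ n‖ * ‖T v f‖ := (T s ^ n).le_opNorm _
    _ ≤ (B * ‖Real.exp (ω * s) ^ n‖) * (M * Real.exp (ω * v)) := by
        gcongr
        exact hpow (by positivity)
    _ = B * M * Real.exp (n * (ω * s) + ω * v) := by
        rw [Real.exp_add, Real.exp_nat_mul, Real.norm_of_nonneg (by positivity)]; ring
    _ = B * M * ‖Real.exp (ω * t)‖ := by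
        rw [Real.norm_of_nonneg (Real.exp_pos _).le, hv]; ring_nf

end IsC0Semigroup_s18

section EventuallyPositive

variable {L : Type*} [TopologicalSpace L] {T : ℝ → C₀(L, ℝ) →L[ℝ] C₀(L, ℝ)}

/-- Individual eventual positivity: the time after which the orbit of `f ≥ 0` stays positive may
depend on `f`. -/
def IsEventuallyPositive (T : ℝ → C₀(L, ℝ) →L[ℝ] C₀(L, ℝ)) : Prop :=
  ∀ f, (∀ x, 0 ≤ f x) → ∀ᶠ t in atTop, ∀ x, 0 ≤ T t f x

/-- Closed ideals of the Banach lattice `C₀(L, ℝ)`, with order and modulus taken pointwise. -/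
structure IsClosedLatticeIdeal (I : Submodule ℝ C₀(L, ℝ)) : Prop where
  isClosed : IsClosed (I : Set C₀(L, ℝ))
  mem_of_abs_le : ∀ f g, (∀ x, |f x| ≤ |g x|) → g ∈ I → f ∈ I

/-- Persistent irreducibility: no non-trivial closed lattice ideal is invariant under `T t` for all
sufficiently large `t`. -/
def IsPersistentlyIrreducible (T : ℝ → C₀(L, ℝ) →L[ℝ] C₀(L, ℝ)) : Prop :=
  ∀ I, IsClosedLatticeIdeal I → (∀ᶠ t in atTop, ∀ f ∈ I, T t f ∈ I) → I = ⊥ ∨ I = ⊤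

lemma isClosedLatticeIdeal_vanishingIdeal (Z : Set L) :
    IsClosedLatticeIdeal (vanishingIdeal Z) where
  isClosed := isClosed_vanishingIdeal Z
  mem_of_abs_le f g hfg hg := mem_vanishingIdeal.2 fun x hx => by
    simpa [mem_vanishingIdeal.1 hg x hx] using hfg x

namespace IsEventuallyPositive

lemma eventually_apply_le (hpos : IsEventuallyPositive T) {f g : C₀(L, ℝ)}
    (hfg : ∀ x, f x ≤ g x) : ∀ᶠ t in atTop, ∀ x, T t f x ≤ T t g x := by
  filter_upwards [hpos (g - f) fun x => sub_nonneg.2 (hfg x)] with t ht x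
  simpa using ht x

lemma eventually_abs_apply_le (hpos : IsEventuallyPositive T) {f g : C₀(L, ℝ)}
    (hfg : ∀ x, |f x| ≤ g x) : ∀ᶠ t in atTop, ∀ x, |T t f x| ≤ T t g x := by
  filter_upwards [hpos.eventually_apply_le fun x => (abs_le'.1 (hfg x)).1,
    hpos.eventually_apply_le (f := -f) fun x => (abs_le'.1 (hfg x)).2] with t hle hneg_le x
  exact abs_le'.2 ⟨hle x, by simpa using hneg_le x⟩

lemma eventually_forall_mem_vanishingIdeal (hpos : IsEventuallyPositive T) {u : C₀(L, ℝ)}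
    (hu : ∀ x, 0 ≤ u x) {Z : Set L} (huZ : ∀ᶠ t in atTop, T t u ∈ vanishingIdeal Z) :
    ∀ᶠ t in atTop, ∀ g ∈ vanishingIdeal {x | u x = 0}, T t g ∈ vanishingIdeal Z := by
  have hmul : ∀ h : C₀(L, ℝ), ∀ᶠ t in atTop, T t (h * u) ∈ vanishingIdeal Z := fun h => by
    have hle : ∀ x, |(h * u) x| ≤ (‖h‖ • u) x := fun x => by
      simpa [abs_mul, abs_of_nonneg (hu x)] using
        mul_le_mul_of_nonneg_right (norm_apply_le_norm_zeroAtInfty h x) (hu x)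
    filter_upwards [hpos.eventually_abs_apply_le hle, huZ] with t ht htZ
    refine (isClosedLatticeIdeal_vanishingIdeal Z).mem_of_abs_le _ (T t (‖h‖ • u))
      (fun x => (ht x).trans (le_abs_self _)) ?_
    simpa using (vanishingIdeal Z).smul_mem ‖h‖ htZ
  have hmul_uniform := eventually_forall_apply_mem_of_forall_eventually_apply_mem
    (S := fun t => (T t).comp ((ContinuousLinearMap.mul ℝ C₀(L, ℝ)).flip u))
    (isClosed_vanishingIdeal Z) hmul
  filter_upwards [hmul_uniform] with t ht g hg
  have hrange : range (fun h : C₀(L, ℝ) => h * u) ⊆ T t ⁻¹' vanishingIdeal Z :=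
    range_subset_iff.2 ht
  exact closure_minimal hrange ((isClosed_vanishingIdeal Z).preimage (T t).continuous)
    (mem_closure_range_mul_of_vanishes fun x hx => mem_vanishingIdeal.1 hg x hx)

end IsEventuallyPositive

namespace IsPersistentlyIrreducible

lemma not_eventually_eq_zero [Nontrivial C₀(L, ℝ)] (hirr : IsPersistentlyIrreducible T)
    (hT : IsC0Semigroup_s18 T) : ¬ ∀ᶠ t in atTop, T t = 0 := by
  intro hzero
  obtain ⟨g, hg⟩ := exists_ne (0 : C₀(L, ℝ))
  obtain ⟨x, hx⟩ := DFunLike.ne_iff.1 hg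
  have hinv : ∀ᶠ t in atTop, ∀ f ∈ vanishingIdeal {x}, T t f ∈ vanishingIdeal {x} :=
    hzero.mono fun t ht f _ => by simp [ht]
  rcases hirr _ (isClosedLatticeIdeal_vanishingIdeal {x}) hinv with hbot | htop
  · have := finiteDimensional_of_vanishingIdeal_singleton_eq_bot hbot
    obtain ⟨t, hTt, ht⟩ := (hzero.and (eventually_ge_atTop 0)).exists
    exact not_isUnit_zero (hTt ▸ hT.isUnit ht)
  · exact hx (mem_vanishingIdeal.1 (htop ▸ Submodule.mem_top : g ∈ vanishingIdeal {x}) x rfl)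

variable {f : C₀(L, ℝ)}

lemma apply_ne_zero (hirr : IsPersistentlyIrreducible T) (hT : IsC0Semigroup_s18 T)
    (hpos : IsEventuallyPositive T) (hf : ∀ x, 0 ≤ f x) (hf0 : f ≠ 0) {t : ℝ} (ht : 0 ≤ t) :
    T t f ≠ 0 := by
  intro hTtf
  have := nontrivial_of_ne f 0 hf0
  have hTf : ∀ᶠ s in atTop, T s f = 0 := by
    filter_upwards [eventually_ge_atTop t] with s hs
    rw [← sub_add_cancel s t, hT.map_add_apply (sub_nonneg.2 hs) ht, hTtf, map_zero]
  have hvanish : ∀ᶠ s in atTop, ∀ g ∈ vanishingIdeal {x | f x = 0}, T s g = 0 := by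
    filter_upwards [hpos.eventually_forall_mem_vanishingIdeal hf (Z := univ)
      (hTf.mono fun s hs => by simp [hs])] with s hs g hg
    exact DFunLike.ext _ _ fun x => mem_vanishingIdeal.1 (hs g hg) x (mem_univ x)
  have hf_mem : f ∈ vanishingIdeal {x | f x = 0} := mem_vanishingIdeal.2 fun _ hx => hx
  rcases hirr _ (isClosedLatticeIdeal_vanishingIdeal _)
    (hvanish.mono fun s hs g hg => by simp [hs g hg]) with hbot | htop
  · exact hf0 ((Submodule.mem_bot ℝ).1 (hbot ▸ hf_mem))
  · exact hirr.not_eventually_eq_zero hT <| hvanish.mono fun s hs =>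
      ContinuousLinearMap.ext fun g => hs g (htop ▸ Submodule.mem_top)

lemma frequently_apply_ne_zero (hirr : IsPersistentlyIrreducible T) (hT : IsC0Semigroup_s18 T)
    (hpos : IsEventuallyPositive T) (hf : ∀ x, 0 ≤ f x) (hf0 : f ≠ 0) {g : C₀(L, ℝ)} {x : L}
    (hgx : g x ≠ 0) : ∃ᶠ t in atTop, T t f x ≠ 0 := by
  by_contra hfx
  simp only [not_frequently, not_not] at hfx
  obtain ⟨t₁, ht₁⟩ := eventually_atTop.1 ((eventually_ge_atTop 0).and ((hpos f hf).and hfx))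
  have ht₁0 : 0 ≤ t₁ := (ht₁ t₁ le_rfl).1
  obtain ⟨u, hu_mem, hu, hu_zero⟩ := exists_mem_closure_span_zeros_eq
    (v := fun t : Ici t₁ => T t f)
    (continuousOn_iff_continuous_domRestrict.1 ((hT.continuousOn f).mono (Ici_subset_Ici.2 ht₁0)))
    fun t => (ht₁ t t.2).2.1
  set Z := {y | u y = 0}
  have orbit_mem : ∀ t, t₁ ≤ t → T t f ∈ vanishingIdeal Z := fun t ht =>
    mem_vanishingIdeal.2 fun y hy => (hu_zero y).1 hy ⟨t, ht⟩
  have hTu : ∀ s, 0 ≤ s → T s u ∈ vanishingIdeal Z := fun s hs => by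
    have hspan : Submodule.span ℝ (range fun t : Ici t₁ => T t f) ≤
        (vanishingIdeal Z).comap (T s : C₀(L, ℝ) →ₗ[ℝ] C₀(L, ℝ)) := by
      refine Submodule.span_le.2 (range_subset_iff.2 fun t => ?_)
      change T s (T t f) ∈ vanishingIdeal Z
      rw [← hT.map_add_apply hs (ht₁0.trans t.2)]
      exact orbit_mem _ (le_add_of_nonneg_of_le hs t.2)
    exact Submodule.topologicalClosure_minimal _ hspan
      ((isClosed_vanishingIdeal Z).preimage (T s).continuous) hu_mem
  rcases hirr _ (isClosedLatticeIdeal_vanishingIdeal Z)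
    (hpos.eventually_forall_mem_vanishingIdeal hu ((eventually_ge_atTop 0).mono hTu))
    with hbot | htop
  · exact hirr.apply_ne_zero hT hpos hf hf0 ht₁0
      ((Submodule.mem_bot ℝ).1 (hbot ▸ orbit_mem t₁ le_rfl))
  · have hxZ : x ∈ Z := (hu_zero x).2 fun t => (ht₁ t t.2).2.2
    exact hgx (mem_vanishingIdeal.1 (htop ▸ Submodule.mem_top : g ∈ vanishingIdeal Z) x hxZ)

lemma exists_eventually_mul_norm_le_sum (hirr : IsPersistentlyIrreducible T)
    (hT : IsC0Semigroup_s18 T) (hpos : IsEventuallyPositive T) (hf : ∀ x, 0 ≤ f x) (hf0 : f ≠ 0)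
    {g : C₀(L, ℝ)} {K : Set L} (hK : IsCompact K) (hfK : ∀ x ∉ K, f x = 0)
    (hgK : ∀ x ∈ K, g x ≠ 0) :
    ∃ F : Finset ℝ, (∀ a ∈ F, 0 < a) ∧
      ∃ c : ℝ, 0 < c ∧ ∀ᶠ t in atTop, c * ‖T t f‖ ≤ ∑ a ∈ F, ‖T (a + t) f‖ := by
  obtain ⟨t₁, ht₁⟩ := eventually_atTop.1 ((eventually_gt_atTop 0).and (hpos f hf))
  have hcover : ∀ x ∈ K, ∃ t ∈ Ici t₁, T t f x ≠ 0 := fun x hx =>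
    frequently_atTop.1 (hirr.frequently_apply_ne_zero hT hpos hf hf0 (hgK x hx)) t₁
  obtain ⟨F, hFt₁, c, hc, hfF⟩ := exists_mul_le_finsetSum_of_isCompact hK
    (map_continuous f).continuousOn (fun x hx => (hfK x hx).le)
    (fun t _ => map_continuous (T t f)) (fun t ht => (ht₁ t ht).2) hcover
  have hF : ∀ a ∈ F, 0 < a := fun a ha => (ht₁ a (hFt₁ ha)).1
  have hle : ∀ x, |(c • f) x| ≤ (∑ a ∈ F, T a f) x := fun x => by
    calc |(c • f) x| = c * f x := abs_of_nonneg (mul_nonneg hc.le (hf x))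
      _ ≤ ∑ a ∈ F, T a f x := hfF x
      _ = (∑ a ∈ F, T a f) x := (map_sum (zeroAtInftyEvalCLM x) (fun a => T a f) F).symm
  refine ⟨F, hF, c, hc, ?_⟩
  filter_upwards [hpos.eventually_abs_apply_le hle, eventually_ge_atTop 0] with t ht ht0
  calc c * ‖T t f‖ = ‖T t (c • f)‖ := by rw [map_smul, norm_smul, Real.norm_of_nonneg hc.le]
    _ ≤ ‖T t (∑ a ∈ F, T a f)‖ := norm_zeroAtInfty_le (norm_nonneg _) fun x =>
        (ht x).trans ((Real.le_norm_self _).trans (norm_apply_le_norm_zeroAtInfty _ x))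
    _ = ‖∑ a ∈ F, T (a + t) f‖ := by
        rw [map_sum]
        congr 1
        refine Finset.sum_congr rfl fun a ha => ?_
        rw [add_comm, hT.map_add_apply ht0 (hF a ha).le]
    _ ≤ ∑ a ∈ F, ‖T (a + t) f‖ := norm_sum_le _ _

end IsPersistentlyIrreducible

theorem
  persistently_irreducible_eventually_positive_semigroup_on_C0_has_positive_spectral_radius_general
    [Nontrivial C₀(L, ℝ)] (hT : IsC0Semigroup_s18 T) (hpos : IsEventuallyPositive T)
    (hirr : IsPersistentlyIrreducible T) {s : ℝ} (hs : 0 < s) {ρ : ℝ}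
    (hρ : Tendsto (fun n : ℕ => ‖T s ^ n‖ ^ (1 / (n : ℝ))) atTop (𝓝 ρ)) : 0 < ρ := by
  by_contra! hρ0
  obtain ⟨f, g, K, hf, hf0, hK, hfK, hgK⟩ := exists_nonneg_ne_zero_eq_zero_off_isCompact (L := L)
  obtain ⟨F, hF, c, hc, hdom⟩ :=
    hirr.exists_eventually_mul_norm_le_sum hT hpos hf hf0 hK hfK hgK
  have hdecay : ∀ ω : ℝ, (fun t => ‖T t f‖) =O[atTop] fun t => Real.exp (ω * t) := fun ω =>
    (hT.isBigO_exp hs hρ (hρ0.trans_lt (Real.exp_pos _)) f).norm_left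
  obtain ⟨t, htf, ht⟩ := ((eventually_nonpos_of_mul_le_sum_translates hc hF hdom hdecay).and
    (eventually_ge_atTop 0)).exists
  exact hirr.apply_ne_zero hT hpos hf hf0 ht (norm_le_zero_iff.1 htf)

end EventuallyPositive

/-- Let `L` be a non-empty locally compact Hausdorff space and `(T t)_{t ≥ 0}` a
`C₀`-semigroup on `C₀(L, ℝ)` (with pointwise order) that is individually eventually
positive and persistently irreducible.  Then there exists `s > 0` such that the operator
`T s` has non-zero spectral radius, i.e. the Gelfand limit `lim ‖(T s)^n‖^{1/n}` (which
exists and equals the spectral radius) is strictly positive. -/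
theorem persistently_irreducible_eventually_positive_semigroup_on_C0_has_positive_spectral_radius
    {L : Type*} [TopologicalSpace L] [LocallyCompactSpace L] [T2Space L] [Nonempty L]
    (T : ℝ → C₀(L, ℝ) →L[ℝ] C₀(L, ℝ))
    (hT0 : T 0 = 1)
    (hTadd : ∀ s t : ℝ, 0 ≤ s → 0 ≤ t → T (s + t) = (T s).comp (T t))
    (hTcont : ∀ f : C₀(L, ℝ), ContinuousOn (fun t : ℝ => T t f) (Set.Ici 0))
    -- individual eventual positivity (positivity taken pointwise):
    (hep : ∀ f : C₀(L, ℝ), (∀ x : L, 0 ≤ f x) →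
      ∃ t₀ : ℝ, 0 ≤ t₀ ∧ ∀ t : ℝ, t₀ ≤ t → ∀ x : L, 0 ≤ (T t f) x)
    -- persistent irreducibility: the only closed ideals that are eventually invariant
    -- are `{0}` and the whole space:
    (hirr : ∀ I : Submodule ℝ C₀(L, ℝ), IsClosed (I : Set C₀(L, ℝ)) →
      (∀ f g : C₀(L, ℝ), (∀ x : L, |f x| ≤ |g x|) → g ∈ I → f ∈ I) →
      (∃ t₀ : ℝ, 0 ≤ t₀ ∧ ∀ t : ℝ, t₀ ≤ t → ∀ f ∈ I, T t f ∈ I) →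
      I = ⊥ ∨ I = ⊤) :
    ∃ s : ℝ, 0 < s ∧ ∀ r : ℝ,
      Tendsto (fun n : ℕ => ‖(T s) ^ n‖ ^ (1 / (n : ℝ))) atTop (nhds r) → 0 < r := by
  have := nontrivial_zeroAtInfty (L := L)
  have eventually_iff {p : ℝ → Prop} :
      (∀ᶠ t in atTop, p t) ↔ ∃ t₀, 0 ≤ t₀ ∧ ∀ t, t₀ ≤ t → p t :=
    (atTop_basis' (0 : ℝ)).eventually_iff
  have hpos : IsEventuallyPositive T := fun f hf => eventually_iff.2 (hep f hf)
  have hirr' : IsPersistentlyIrreducible T := fun I hI hinv =>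
    hirr I hI.isClosed hI.mem_of_abs_le (eventually_iff.1 hinv)
  refine ⟨1, one_pos, fun r hr => ?_⟩
  exact
  persistently_irreducible_eventually_positive_semigroup_on_C0_has_positive_spectral_radius_general
    ⟨hT0, hTadd, hTcont⟩ hpos hirr' one_pos hr
end
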